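/- Let α ∈ (0, π/4) and let γ be a time optimal trajectory of (Σ)_S on [a,b] with γ(a) = (0,0,1) (the north pole). Then γ meets the equator at most once: the set {t ∈ [a,b] : γ(t)₃ = 0} contains at most one element. -/

import Mathlib

open Real MeasureTheory intervalIntegral

/-- The drift vector field on the sphere: `F_S(y) = cos α·(−y₂, y₁, 0)`. -/
noncomputable def FS (α : ℝ) (y : Fin 3 → ℝ) : Fin 3 → ℝ :=
  ![Real.cos α * (-(y 1)), Real.cos α * y 0, 0]

/-- The controlled vector field on the sphere: `G_S(y) = sin α·(0, −y₃, y₂)`. -/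
noncomputable def GS (α : ℝ) (y : Fin 3 → ℝ) : Fin 3 → ℝ :=
  ![0, Real.sin α * (-(y 2)), Real.sin α * y 1]

/-- An admissible pair for `(Σ)_S` on `[a,b]`: a measurable control `u : [a,b] → [-1,1]`
together with an absolutely continuous curve `γ : [a,b] → S²` solving
`γ' = F_S(γ) + u·G_S(γ)` a.e. (expressed in integral form, componentwise). -/
structure AdmissiblePairS (α a b : ℝ) (γ : ℝ → Fin 3 → ℝ) (u : ℝ → ℝ) : Prop where
  hab : a ≤ b
  humeas : Measurable u
  hubound : ∀ t ∈ Set.Icc a b, |u t| ≤ 1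
  hsph : ∀ t ∈ Set.Icc a b, (γ t 0) ^ 2 + (γ t 1) ^ 2 + (γ t 2) ^ 2 = 1
  hcont : ContinuousOn γ (Set.Icc a b)
  hode : ∀ t ∈ Set.Icc a b, ∀ i,
    γ t i = γ a i + ∫ s in a..t, (FS α (γ s) i + u s * GS α (γ s) i)

/-- Time optimality for `(Σ)_S`. -/
def TimeOptimalS (α a b : ℝ) (γ : ℝ → Fin 3 → ℝ) (u : ℝ → ℝ) : Prop :=
  AdmissiblePairS α a b γ u ∧
  ∀ a' b' γ' u', AdmissiblePairS α a' b' γ' u' →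
    γ' a' = γ a → γ' b' = γ b → b - a ≤ b' - a'

/-- `t` is a switching time of the control `u : [a,b] → [-1,1]`. -/
def IsSwitching (a b : ℝ) (u : ℝ → ℝ) (t : ℝ) : Prop :=
  t ∈ Set.Icc a b ∧ ∀ ε > 0, ¬ ∃ c : ℝ, (c = 1 ∨ c = -1) ∧
    ∀ᵐ s ∂(volume.restrict (Set.Ioo (t - ε) (t + ε) ∩ Set.Icc a b)), u s = c


/-- Continuous function with integral representation. -/
def IE (a b : ℝ) (f g : ℝ → ℝ) : Prop :=
  ContinuousOn f (Set.Icc a b) ∧ IntervalIntegrable g volume a b ∧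
    ∀ t ∈ Set.Icc a b, f t = f a + ∫ r in a..t, g r

lemma IE.intg {a b : ℝ} {f g : ℝ → ℝ} (h : IE a b f g) {t t' : ℝ} (ht : t ∈ Set.Icc a b)
    (ht' : t' ∈ Set.Icc a b) : IntervalIntegrable g volume t t' := by
  refine h.2.1.mono_set ?_
  rw [Set.uIcc_of_le (ht.1.trans ht.2)]
  exact Set.uIcc_subset_Icc ht ht'

lemma IE.diff {a b : ℝ} {f g : ℝ → ℝ} (h : IE a b f g) {t t' : ℝ} (ht : t ∈ Set.Icc a b)
    (ht' : t' ∈ Set.Icc a b) : f t' - f t = ∫ r in t..t', g r := by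
  have hab := ht.1.trans ht.2
  have ha : a ∈ Set.Icc a b := ⟨le_rfl, hab⟩
  rw [h.2.2 t ht, h.2.2 t' ht', ← integral_interval_sub_left (h.intg ha ht') (h.intg ha ht)]
  ring

lemma IE.mono {a b : ℝ} {f g : ℝ → ℝ} (h : IE a b f g) {a' b' : ℝ} (ha : a ≤ a') (hab : a' ≤ b')
    (hb : b' ≤ b) : IE a' b' f g := by
  have h1 : a' ∈ Set.Icc a b := ⟨ha, hab.trans hb⟩
  have h2 : b' ∈ Set.Icc a b := ⟨ha.trans hab, hb⟩
  refine ⟨h.1.mono (Set.Icc_subset_Icc ha hb), h.intg h1 h2, fun t ht => ?_⟩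
  have := h.diff h1 (t' := t) ⟨ha.trans ht.1, ht.2.trans hb⟩
  linarith

lemma IE.congr {a b : ℝ} {f g f' g' : ℝ → ℝ} (hab : a ≤ b) (h : IE a b f g)
    (hf : ∀ t ∈ Set.Icc a b, f' t = f t) (hg : ∀ t ∈ Set.Ioc a b, g' t = g t) : IE a b f' g' := by
  refine ⟨h.1.congr hf, h.2.1.congr ?_, fun t ht => ?_⟩
  · intro t ht
    rw [Set.uIoc_of_le hab] at ht
    exact (hg t ht).symm
  · rw [hf t ht, hf a ⟨le_rfl, hab⟩, h.2.2 t ht]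
    congr 1
    refine integral_congr_ae (Filter.Eventually.of_forall fun r hr => ?_)
    rw [Set.uIoc_of_le ht.1] at hr
    exact (hg r ⟨hr.1, hr.2.trans ht.2⟩).symm

lemma IE.neg {a b : ℝ} {f g : ℝ → ℝ} (h : IE a b f g) :
    IE a b (fun t => - f t) (fun t => - g t) := by
  refine ⟨h.1.neg, h.2.1.neg, fun t ht => ?_⟩
  simp only
  rw [h.2.2 t ht, intervalIntegral.integral_neg]
  ring

lemma IE.shift {a b : ℝ} {f g : ℝ → ℝ} (h : IE a b f g) (d : ℝ) :
    IE (a - d) (b - d) (fun t => f (t + d)) (fun t => g (t + d)) := by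
  refine ⟨h.1.comp (by fun_prop) fun t ht => ?_, ?_, fun t ht => ?_⟩
  · constructor <;> linarith [ht.1, ht.2]
  · exact h.2.1.comp_add_right d
  · have := h.2.2 (t + d) ⟨by linarith [ht.1], by linarith [ht.2]⟩
    simp only
    rw [this, integral_comp_add_right (fun r => g r) d]
    simp

lemma IE.rev {b : ℝ} {f g : ℝ → ℝ} (hb : 0 ≤ b) (h : IE 0 b f g) :
    IE 0 b (fun t => f (b - t)) (fun t => - g (b - t)) := by
  refine ⟨h.1.comp (by fun_prop) fun t ht => ?_, ?_, fun t ht => ?_⟩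
  · constructor <;> linarith [ht.1, ht.2]
  · have := (h.2.1.comp_sub_left b).symm.neg
    simp only [sub_zero, sub_self] at this
    exact this
  · have := h.diff (t := b - t) (t' := b) ⟨by linarith [ht.2], by linarith [ht.1]⟩ ⟨hb, le_rfl⟩
    have h2 : ∫ r in (0:ℝ)..t, - g (b - r) = - ∫ r in (b-t)..b, g r := by
      rw [intervalIntegral.integral_neg, integral_comp_sub_left (fun r => g r) b]
      simp
    rw [h2]
    simp only [sub_zero]
    linarith

lemma IE.concat {T T' : ℝ} (hT : 0 ≤ T) (hT' : 0 ≤ T') {f g f' g' : ℝ → ℝ} (h : IE 0 T f g)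
    (h' : IE 0 T' f' g') (hm : f' 0 = f T) :
    IE 0 (T + T') (fun t => if t ≤ T then f t else f' (t - T))
      (fun t => if t ≤ T then g t else g' (t - T)) := by
  have h1 : IE 0 T (fun t => if t ≤ T then f t else f' (t - T))
      (fun t => if t ≤ T then g t else g' (t - T)) :=
    h.congr hT (fun t ht => if_pos ht.2) (fun t ht => if_pos ht.2)
  have h2 : IE T (T + T') (fun t => if t ≤ T then f t else f' (t - T))
      (fun t => if t ≤ T then g t else g' (t - T)) := by
    have := h'.shift (-T)
    simp only [zero_add, sub_neg_eq_add] at this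
    rw [add_comm T' T] at this
    refine this.congr (by linarith) (fun t ht => ?_) (fun t ht => ?_)
    · rcases ht.1.eq_or_lt with e | e
      · subst e; simp [hm]
      · simp [not_le.mpr e, sub_eq_add_neg]
    · simp [not_le.mpr ht.1, sub_eq_add_neg]
  refine ⟨?_, h1.2.1.trans h2.2.1, fun t ht => ?_⟩
  · rw [← Set.Icc_union_Icc_eq_Icc hT (by linarith : T ≤ T + T')]
    exact h1.1.union_of_isClosed h2.1 isClosed_Icc isClosed_Icc
  · rcases le_total t T with e | e
    · exact h1.2.2 t ⟨ht.1, e⟩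
    · have e1 := h1.2.2 T ⟨hT, le_rfl⟩
      have e2 := h2.2.2 t ⟨e, ht.2⟩
      rw [← integral_add_adjacent_intervals h1.2.1 (h2.intg ⟨le_rfl, by linarith⟩ ⟨e, ht.2⟩)]
      linarith

lemma IE.of_deriv {a b : ℝ} (hab : a ≤ b) {f g : ℝ → ℝ} (hd : ∀ t, HasDerivAt f (g t) t) (hg : Continuous g) :
    IE a b f g := by
  refine ⟨fun t _ => (hd t).continuousAt.continuousWithinAt, hg.intervalIntegrable _ _, fun t _ => ?_⟩
  rw [integral_eq_sub_of_hasDerivAt (fun r _ => hd r) (hg.intervalIntegrable _ _)]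
  ring

/-- trajectories in coordinates. -/
structure Tr (c s a b : ℝ) (x y z u : ℝ → ℝ) : Prop where
  hab : a ≤ b
  um : Measurable u
  ub : ∀ t ∈ Set.Icc a b, |u t| ≤ 1
  sph : ∀ t ∈ Set.Icc a b, x t ^ 2 + y t ^ 2 + z t ^ 2 = 1
  ex : IE a b x (fun r => - (c * y r))
  ey : IE a b y (fun r => c * x r - u r * (s * z r))
  ez : IE a b z (fun r => u r * (s * y r))

lemma intg_mul {a b : ℝ} (hab : a ≤ b) {u f : ℝ → ℝ} (hu : Measurable u)
    (hub : ∀ t ∈ Set.Icc a b, |u t| ≤ 1) (hf : ContinuousOn f (Set.Icc a b)) :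
    IntervalIntegrable (fun r => u r * f r) volume a b := by
  have hf' : IntervalIntegrable f volume a b :=
    ContinuousOn.intervalIntegrable (by rwa [Set.uIcc_of_le hab])
  rw [intervalIntegrable_iff_integrableOn_Icc_of_le hab] at hf' ⊢
  refine Integrable.bdd_mul hf' (c := 1) hu.aestronglyMeasurable ?_
  filter_upwards [ae_restrict_mem measurableSet_Icc] with t ht
  simpa using hub t ht

lemma Tr.mono {c s a b : ℝ} {x y z u : ℝ → ℝ} (h : Tr c s a b x y z u) {a' b' : ℝ}
    (ha : a ≤ a') (hab : a' ≤ b') (hb : b' ≤ b) : Tr c s a' b' x y z u where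
  hab := hab
  um := h.um
  ub := fun t ht => h.ub t ⟨ha.trans ht.1, ht.2.trans hb⟩
  sph := fun t ht => h.sph t ⟨ha.trans ht.1, ht.2.trans hb⟩
  ex := h.ex.mono ha hab hb
  ey := h.ey.mono ha hab hb
  ez := h.ez.mono ha hab hb

lemma Tr.shift {c s a b : ℝ} {x y z u : ℝ → ℝ} (h : Tr c s a b x y z u) (d : ℝ) :
    Tr c s (a - d) (b - d) (fun t => x (t + d)) (fun t => y (t + d)) (fun t => z (t + d))
      (fun t => u (t + d)) where
  hab := by linarith [h.hab]
  um := h.um.comp (measurable_id.add_const d)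
  ub := fun t ht => h.ub _ ⟨by linarith [ht.1], by linarith [ht.2]⟩
  sph := fun t ht => h.sph _ ⟨by linarith [ht.1], by linarith [ht.2]⟩
  ex := h.ex.shift d
  ey := h.ey.shift d
  ez := h.ez.shift d

/-- reflection across the equator -/
lemma Tr.refl {c s a b : ℝ} {x y z u : ℝ → ℝ} (h : Tr c s a b x y z u) :
    Tr c s a b x y (fun t => - z t) (fun t => - u t) where
  hab := h.hab
  um := h.um.neg
  ub := fun t ht => by simpa using h.ub t ht
  sph := fun t ht => by simpa using h.sph t ht
  ex := h.ex
  ey := by simpa using h.ey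
  ez := by simpa using h.ez.neg

/-- half turn about the vertical axis -/
lemma Tr.half {c s a b : ℝ} {x y z u : ℝ → ℝ} (h : Tr c s a b x y z u) :
    Tr c s a b (fun t => - x t) (fun t => - y t) z (fun t => - u t) where
  hab := h.hab
  um := h.um.neg
  ub := fun t ht => by simpa using h.ub t ht
  sph := fun t ht => by simpa using h.sph t ht
  ex := by simpa using h.ex.neg
  ey := h.ey.neg.congr h.hab (fun _ _ => rfl) (fun _ _ => by ring)
  ez := by simpa using h.ez

lemma Tr.rev {c s b : ℝ} {x y z u : ℝ → ℝ} (h : Tr c s 0 b x y z u) :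
    Tr c s 0 b (fun t => x (b - t)) (fun t => - y (b - t)) (fun t => z (b - t))
      (fun t => u (b - t)) where
  hab := h.hab
  um := h.um.comp (measurable_const.sub measurable_id)
  ub := fun t ht => h.ub _ ⟨by linarith [ht.2], by linarith [ht.1]⟩
  sph := fun t ht => by simpa using h.sph (b - t) ⟨by linarith [ht.2], by linarith [ht.1]⟩
  ex := by simpa using h.ex.rev h.hab
  ey := (h.ey.rev h.hab).neg.congr h.hab (fun _ _ => rfl) (fun _ _ => by ring)
  ez := by simpa using h.ez.rev h.hab

lemma Tr.concat {c s T T' : ℝ} {x y z u x' y' z' u' : ℝ → ℝ} (h : Tr c s 0 T x y z u)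
    (h' : Tr c s 0 T' x' y' z' u') (hx : x' 0 = x T) (hy : y' 0 = y T) (hz : z' 0 = z T) :
    Tr c s 0 (T + T') (fun t => if t ≤ T then x t else x' (t - T))
      (fun t => if t ≤ T then y t else y' (t - T))
      (fun t => if t ≤ T then z t else z' (t - T))
      (fun t => if t ≤ T then u t else u' (t - T)) where
  hab := by linarith [h.hab, h'.hab]
  um := Measurable.ite measurableSet_Iic h.um (h'.um.comp (measurable_id.sub_const T))
  ub := fun t ht => by
    by_cases e : t ≤ T
    · simpa [e] using h.ub t ⟨ht.1, e⟩
    · simpa [e] using h'.ub (t - T) ⟨by linarith, by linarith [ht.2]⟩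
  sph := fun t ht => by
    by_cases e : t ≤ T
    · simpa [e] using h.sph t ⟨ht.1, e⟩
    · simpa [e] using h'.sph (t - T) ⟨by linarith, by linarith [ht.2]⟩
  ex := (h.ex.concat h.hab h'.hab h'.ex hx).congr (by linarith [h.hab, h'.hab]) (fun _ _ => rfl)
    (fun t _ => by split_ifs <;> rfl)
  ey := (h.ey.concat h.hab h'.hab h'.ey hy).congr (by linarith [h.hab, h'.hab]) (fun _ _ => rfl)
    (fun t _ => by split_ifs <;> rfl)
  ez := (h.ez.concat h.hab h'.hab h'.ez hz).congr (by linarith [h.hab, h'.hab]) (fun _ _ => rfl)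
    (fun t _ => by split_ifs <;> rfl)

/-- Reachability in time exactly `T`. -/
def Reach (c s T x0 y0 z0 x1 y1 z1 : ℝ) : Prop :=
  ∃ x y z u : ℝ → ℝ, Tr c s 0 T x y z u ∧ x 0 = x0 ∧ y 0 = y0 ∧ z 0 = z0 ∧
    x T = x1 ∧ y T = y1 ∧ z T = z1

lemma Reach.trans {c s T T' x0 y0 z0 x1 y1 z1 x2 y2 z2 : ℝ} (h : Reach c s T x0 y0 z0 x1 y1 z1)
    (h' : Reach c s T' x1 y1 z1 x2 y2 z2) : Reach c s (T + T') x0 y0 z0 x2 y2 z2 := by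
  obtain ⟨x, y, z, u, ht, rfl, rfl, rfl, hx, hy, hz⟩ := h
  obtain ⟨x', y', z', u', ht', hx', hy', hz', rfl, rfl, rfl⟩ := h'
  have h0 := ht.hab
  have h0' := ht'.hab
  have key := ht.concat ht' (hx'.trans hx.symm) (hy'.trans hy.symm) (hz'.trans hz.symm)
  refine ⟨_, _, _, _, key, by simp [h0], by simp [h0], by simp [h0], ?_, ?_, ?_⟩
  all_goals
    rcases h0'.eq_or_lt with e | e
    · subst e; simp [*]
    · have : ¬ (T + T' ≤ T) := by linarith
      simp [this]

lemma Tr.reach {c s a b : ℝ} {x y z u : ℝ → ℝ} (h : Tr c s a b x y z u) {t t' : ℝ}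
    (ha : a ≤ t) (hab : t ≤ t') (hb : t' ≤ b) :
    Reach c s (t' - t) (x t) (y t) (z t) (x t') (y t') (z t') := by
  have := (h.mono ha hab hb).shift t
  rw [sub_self] at this
  exact ⟨_, _, _, _, this, by simp, by simp, by simp, by simp, by simp, by simp⟩

lemma Reach.refl {c s T x0 y0 z0 x1 y1 z1 : ℝ} (h : Reach c s T x0 y0 z0 x1 y1 z1) :
    Reach c s T x0 y0 (-z0) x1 y1 (-z1) := by
  obtain ⟨x, y, z, u, ht, rfl, rfl, rfl, rfl, rfl, rfl⟩ := h
  exact ⟨_, _, _, _, ht.refl, rfl, rfl, rfl, rfl, rfl, rfl⟩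

lemma Reach.half {c s T x0 y0 z0 x1 y1 z1 : ℝ} (h : Reach c s T x0 y0 z0 x1 y1 z1) :
    Reach c s T (-x0) (-y0) z0 (-x1) (-y1) z1 := by
  obtain ⟨x, y, z, u, ht, rfl, rfl, rfl, rfl, rfl, rfl⟩ := h
  exact ⟨_, _, _, _, ht.half, rfl, rfl, rfl, rfl, rfl, rfl⟩

lemma Reach.rev {c s T x0 y0 z0 x1 y1 z1 : ℝ} (h : Reach c s T x0 y0 z0 x1 y1 z1) :
    Reach c s T x1 (-y1) z1 x0 (-y0) z0 := by
  obtain ⟨x, y, z, u, ht, rfl, rfl, rfl, rfl, rfl, rfl⟩ := h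
  exact ⟨_, _, _, _, ht.rev, by simp, by simp, by simp, by simp, by simp, by simp⟩

/-- rotation coordinates -/
noncomputable def RX (c s x y z t : ℝ) : ℝ :=
  s * (s * x + c * z) + c * ((c * x - s * z) * cos t - y * sin t)
noncomputable def RY (c s x y z t : ℝ) : ℝ := (c * x - s * z) * sin t + y * cos t
noncomputable def RZ (c s x y z t : ℝ) : ℝ :=
  c * (s * x + c * z) - s * ((c * x - s * z) * cos t - y * sin t)

section rot
variable {c s : ℝ}

lemma RX_zero (hcs : c ^ 2 + s ^ 2 = 1) (x y z : ℝ) : RX c s x y z 0 = x := by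
  simp only [RX, cos_zero, sin_zero]; linear_combination x * hcs
lemma RY_zero (x y z : ℝ) : RY c s x y z 0 = y := by
  simp only [RY, cos_zero, sin_zero]; ring
lemma RZ_zero (hcs : c ^ 2 + s ^ 2 = 1) (x y z : ℝ) : RZ c s x y z 0 = z := by
  simp only [RZ, cos_zero, sin_zero]; linear_combination z * hcs

lemma R_h (hcs : c ^ 2 + s ^ 2 = 1) (x y z t : ℝ) : s * RX c s x y z t + c * RZ c s x y z t = s * x + c * z := by
  simp only [RX, RZ]; linear_combination (s * x + c * z) * hcs
lemma R_A (hcs : c ^ 2 + s ^ 2 = 1) (x y z t : ℝ) : c * RX c s x y z t - s * RZ c s x y z t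
    = (c * x - s * z) * cos t - y * sin t := by
  simp only [RX, RZ]; linear_combination ((c * x - s * z) * cos t - y * sin t) * hcs

lemma R_sph (hcs : c ^ 2 + s ^ 2 = 1) (x y z t : ℝ) :
    RX c s x y z t ^ 2 + RY c s x y z t ^ 2 + RZ c s x y z t ^ 2 = x ^ 2 + y ^ 2 + z ^ 2 := by
  have h1 := R_h hcs x y z t
  have h2 := R_A hcs x y z t
  have h4 : RX c s x y z t ^ 2 + RZ c s x y z t ^ 2 = (s * x + c * z)^2 +
      ((c * x - s * z) * cos t - y * sin t) ^ 2 := by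
    rw [← h1, ← h2]; linear_combination (-(RX c s x y z t ^ 2 + RZ c s x y z t ^ 2)) * hcs
  have h5 := sin_sq_add_cos_sq t
  have h6 : RY c s x y z t = (c * x - s * z) * sin t + y * cos t := rfl
  rw [h6]
  linear_combination h4 + ((c * x - s * z)^2 + y^2) * h5 + (x^2+z^2) * hcs

lemma R_add_X (hcs : c ^ 2 + s ^ 2 = 1) (x y z t r : ℝ) : RX c s (RX c s x y z t) (RY c s x y z t) (RZ c s x y z t) r
    = RX c s x y z (t + r) := by
  have h1 := R_h hcs x y z t
  have h2 := R_A hcs x y z t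
  conv_lhs => rw [RX]
  rw [h1, h2]
  simp only [RX, RY, cos_add, sin_add]; ring
lemma R_add_Y (hcs : c ^ 2 + s ^ 2 = 1) (x y z t r : ℝ) : RY c s (RX c s x y z t) (RY c s x y z t) (RZ c s x y z t) r
    = RY c s x y z (t + r) := by
  have h2 := R_A hcs x y z t
  conv_lhs => rw [RY]
  rw [h2]
  simp only [RY, cos_add, sin_add]; ring
lemma R_add_Z (hcs : c ^ 2 + s ^ 2 = 1) (x y z t r : ℝ) : RZ c s (RX c s x y z t) (RY c s x y z t) (RZ c s x y z t) r
    = RZ c s x y z (t + r) := by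
  have h1 := R_h hcs x y z t
  have h2 := R_A hcs x y z t
  conv_lhs => rw [RZ]
  rw [h1, h2]
  simp only [RZ, RY, cos_add, sin_add]; ring

lemma RX_deriv (x y z t : ℝ) :
    HasDerivAt (fun t => RX c s x y z t) (-(c * RY c s x y z t)) t := by
  have := ((((hasDerivAt_cos t).const_mul (c * x - s * z)).sub
    ((hasDerivAt_sin t).const_mul y)).const_mul c).const_add (s * (s * x + c * z))
  refine this.congr_deriv ?_
  simp only [RY]; ring
lemma RY_deriv (hcs : c ^ 2 + s ^ 2 = 1) (x y z t : ℝ) :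
    HasDerivAt (fun t => RY c s x y z t) (c * RX c s x y z t - s * RZ c s x y z t) t := by
  have := ((hasDerivAt_sin t).const_mul (c * x - s * z)).add ((hasDerivAt_cos t).const_mul y)
  refine this.congr_deriv ?_
  rw [R_A hcs]; ring
lemma RZ_deriv (x y z t : ℝ) :
    HasDerivAt (fun t => RZ c s x y z t) (s * RY c s x y z t) t := by
  have := ((((hasDerivAt_cos t).const_mul (c * x - s * z)).sub
    ((hasDerivAt_sin t).const_mul y)).const_mul s).const_sub (c * (s * x + c * z))
  refine this.congr_deriv ?_
  simp only [RY]; ring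

@[fun_prop]
lemma RX_cont (x y z : ℝ) : Continuous (fun t => RX c s x y z t) := by unfold RX; fun_prop
@[fun_prop]
lemma RY_cont (x y z : ℝ) : Continuous (fun t => RY c s x y z t) := by unfold RY; fun_prop
@[fun_prop]
lemma RZ_cont (x y z : ℝ) : Continuous (fun t => RZ c s x y z t) := by unfold RZ; fun_prop

lemma rot_Tr (hcs : c ^ 2 + s ^ 2 = 1) {x y z : ℝ} (h : x ^ 2 + y ^ 2 + z ^ 2 = 1) {a b : ℝ} (hab : a ≤ b) :
    Tr c s a b (fun t => RX c s x y z t) (fun t => RY c s x y z t) (fun t => RZ c s x y z t)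
      (fun _ => 1) where
  hab := hab
  um := measurable_const
  ub := by simp
  sph := fun t _ => by rw [R_sph hcs, h]
  ex := IE.of_deriv hab (RX_deriv x y z) (by fun_prop)
  ey := by simpa using IE.of_deriv hab (RY_deriv hcs x y z) (by fun_prop)
  ez := by simpa using IE.of_deriv hab (RZ_deriv x y z) (by fun_prop)

lemma rot_Reach (hcs : c ^ 2 + s ^ 2 = 1) {x y z : ℝ} (h : x ^ 2 + y ^ 2 + z ^ 2 = 1) {t : ℝ} (ht : 0 ≤ t) :
    Reach c s t x y z (RX c s x y z t) (RY c s x y z t) (RZ c s x y z t) :=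
  ⟨_, _, _, _, rot_Tr hcs h ht, RX_zero hcs x y z, RY_zero x y z, RZ_zero hcs x y z, rfl, rfl, rfl⟩
end rot

lemma run_Tr (c s θ : ℝ) {a b : ℝ} (hab : a ≤ b) :
    Tr c s a b (fun t => cos (θ + c * t)) (fun t => sin (θ + c * t)) (fun _ => 0) (fun _ => 0) where
  hab := hab
  um := measurable_const
  ub := by simp
  sph := fun t _ => by simp
  ex := by
    refine IE.of_deriv hab (fun t => ?_) (by fun_prop)
    have := (((hasDerivAt_id t).const_mul c).const_add θ).cos
    refine this.congr_deriv ?_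
    simp; ring
  ey := by
    have : IE a b (fun t => sin (θ + c * t)) (fun t => c * cos (θ + c * t)) := by
      refine IE.of_deriv hab (fun t => ?_) (by fun_prop)
      have := (((hasDerivAt_id t).const_mul c).const_add θ).sin
      refine this.congr_deriv ?_
      simp; ring
    simpa using this
  ez := by simpa using IE.of_deriv hab (f := fun _ => (0:ℝ)) (g := fun _ => (0:ℝ)) (fun t => hasDerivAt_const t (0:ℝ)) continuous_const

lemma run_Reach {c : ℝ} (s θ : ℝ) {T : ℝ} (hT : 0 ≤ T) :
    Reach c s T (cos θ) (sin θ) 0 (cos (θ + c * T)) (sin (θ + c * T)) 0 :=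
  ⟨_, _, _, _, run_Tr c s θ hT, by simp, by simp, rfl, rfl, rfl, rfl⟩


lemma IE.add {a b : ℝ} {f g f' g' : ℝ → ℝ} (h : IE a b f g) (h' : IE a b f' g') :
    IE a b (fun t => f t + f' t) (fun t => g t + g' t) := by
  refine ⟨h.1.add h'.1, h.2.1.add h'.2.1, fun t ht => ?_⟩
  have ha : a ∈ Set.Icc a b := ⟨le_rfl, ht.1.trans ht.2⟩
  simp only
  rw [h.2.2 t ht, h'.2.2 t ht, intervalIntegral.integral_add (h.intg ha ht) (h'.intg ha ht)]
  ring

lemma IE.mul_smooth {a b : ℝ} (hab : a ≤ b) {f g φ φ' : ℝ → ℝ} (h : IE a b f g)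
    (hd : ∀ t, HasDerivAt φ (φ' t) t) (hc : Continuous φ') :
    IE a b (fun t => f t * φ t) (fun t => g t * φ t + f t * φ' t) := by
  have hφ : Continuous φ := continuous_iff_continuousAt.2 fun t => (hd t).continuousAt
  have hφ' : ContDiff ℝ 1 φ := by
    rw [contDiff_one_iff_deriv]
    refine ⟨fun t => (hd t).differentiableAt, ?_⟩
    have : deriv φ = φ' := funext fun t => (hd t).deriv
    rwa [this]
  have i1 : IntervalIntegrable (fun t => g t * φ t) volume a b := h.2.1.mul_continuousOn hφ.continuousOn
  have i2 : IntervalIntegrable (fun t => f t * φ' t) volume a b :=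
    ContinuousOn.intervalIntegrable (by rw [Set.uIcc_of_le hab]; exact h.1.mul hc.continuousOn)
  refine ⟨h.1.mul hφ.continuousOn, i1.add i2, fun t ht => ?_⟩
  have ha : a ∈ Set.Icc a b := ⟨le_rfl, hab⟩
  have hg := h.intg ha ht
  have ac1 := hg.absolutelyContinuousOnInterval_intervalIntegral (c := a) Set.left_mem_uIcc
  have ac2 : AbsolutelyContinuousOnInterval φ a t :=
    hφ'.contDiffOn.absolutelyContinuousOnInterval
  have key := ac1.integral_deriv_mul_eq_sub ac2
  have hae := hg.ae_hasDerivAt_integral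
  have e1 : ∫ x in a..t, deriv (fun x => ∫ v in a..x, g v) x * φ x + (∫ v in a..x, g v) * deriv φ x
      = ∫ x in a..t, (g x * φ x + (f x * φ' x - f a * φ' x)) := by
    refine integral_congr_ae ?_
    filter_upwards [hae] with r hr hrm
    have hrm' := hrm
    rw [Set.uIoc_of_le ht.1] at hrm'
    rw [(hr (Set.uIoc_subset_uIcc hrm) a Set.left_mem_uIcc).deriv, (hd r).deriv,
      h.2.2 r ⟨hrm'.1.le, hrm'.2.trans ht.2⟩]
    ring
  rw [e1] at key
  have j1 : IntervalIntegrable (fun t => g t * φ t) volume a t := i1.mono_set (by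
    rw [Set.uIcc_of_le hab, Set.uIcc_of_le ht.1]; exact Set.Icc_subset_Icc_right ht.2)
  have j2 : IntervalIntegrable (fun t => f t * φ' t) volume a t := i2.mono_set (by
    rw [Set.uIcc_of_le hab, Set.uIcc_of_le ht.1]; exact Set.Icc_subset_Icc_right ht.2)
  have j3 : IntervalIntegrable (fun t => f a * φ' t) volume a t :=
    (continuous_const.mul hc).intervalIntegrable _ _
  rw [intervalIntegral.integral_add j1 (j2.sub j3), intervalIntegral.integral_sub j2 j3,
    intervalIntegral.integral_const_mul,
    integral_eq_sub_of_hasDerivAt (fun r _ => hd r) (hc.intervalIntegrable _ _)] at key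
  simp only
  rw [intervalIntegral.integral_add j1 j2]
  have e2 := h.2.2 t ht
  simp only [integral_same, zero_mul, sub_zero] at key
  rw [e2]
  rw [e2] at *
  linarith

section
variable {c s a b : ℝ} {x y z u : ℝ → ℝ}

lemma Tr.IE_lin (h : Tr c s a b x y z u) {φ φ' ψ ψ' χ χ' : ℝ → ℝ}
    (h1 : ∀ t, HasDerivAt φ (φ' t) t) (c1 : Continuous φ')
    (h2 : ∀ t, HasDerivAt ψ (ψ' t) t) (c2 : Continuous ψ')
    (h3 : ∀ t, HasDerivAt χ (χ' t) t) (c3 : Continuous χ') :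
    IE a b (fun t => x t * φ t + y t * ψ t + z t * χ t)
      (fun t => (-(c * y t) * φ t + x t * φ' t) +
        ((c * x t - u t * (s * z t)) * ψ t + y t * ψ' t) + (u t * (s * y t) * χ t + z t * χ' t)) :=
  ((h.ex.mul_smooth h.hab h1 c1).add (h.ey.mul_smooth h.hab h2 c2)).add
    (h.ez.mul_smooth h.hab h3 c3)

lemma hd_cos (T t : ℝ) : HasDerivAt (fun t => cos (T - t)) (sin (T - t)) t := by
  have := ((hasDerivAt_id t).const_sub T).cos
  exact this.congr_deriv (by simp)
lemma hd_sin (T t : ℝ) : HasDerivAt (fun t => sin (T - t)) (-cos (T - t)) t := by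
  have := ((hasDerivAt_id t).const_sub T).sin
  exact this.congr_deriv (by simp)

lemma Tr.YX (hcs : c ^ 2 + s ^ 2 = 1) (h : Tr c s a b x y z u) (T : ℝ) :
    IE a b (fun t => RX c s (x t) (y t) (z t) (T - t))
      (fun t => -((1 - u t) * (c * s * (s * y t * (1 - cos (T - t)) + z t * sin (T - t))))) := by
  refine (h.IE_lin (φ := fun t => s ^ 2 + c ^ 2 * cos (T - t)) (φ' := fun t => c ^ 2 * sin (T - t))
    (ψ := fun t => - c * sin (T - t)) (ψ' := fun t => - c * -cos (T - t))
    (χ := fun t => s * c - s * c * cos (T - t)) (χ' := fun t => - (s * c * sin (T - t)))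
    (fun t => ((hd_cos T t).const_mul _).const_add _) (by fun_prop)
    (fun t => (hd_sin T t).const_mul _) (by fun_prop)
    (fun t => ((hd_cos T t).const_mul _).const_sub _) (by fun_prop)).congr h.hab
    (fun t _ => ?_) (fun t _ => ?_)
  · simp only [RX]; ring
  · linear_combination (c * y t * cos (T - t)) * hcs

lemma Tr.YY (hcs : c ^ 2 + s ^ 2 = 1) (h : Tr c s a b x y z u) (T : ℝ) :
    IE a b (fun t => RY c s (x t) (y t) (z t) (T - t))
      (fun t => -((1 - u t) * (-s * (s * y t * sin (T - t) + z t * cos (T - t))))) := by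
  refine (h.IE_lin (φ := fun t => c * sin (T - t)) (φ' := fun t => c * -cos (T - t))
    (ψ := fun t => cos (T - t)) (ψ' := fun t => sin (T - t))
    (χ := fun t => (-s) * sin (T - t)) (χ' := fun t => (-s) * -cos (T - t))
    (fun t => ((hd_sin T t).const_mul _)) (by fun_prop)
    (fun t => (hd_cos T t)) (by fun_prop)
    (fun t => ((hd_sin T t).const_mul _)) (by fun_prop)).congr h.hab
    (fun t _ => ?_) (fun t _ => ?_)
  · simp only [RY]; ring
  · linear_combination (y t * sin (T - t) ) * hcs

lemma Tr.YZ (hcs : c ^ 2 + s ^ 2 = 1) (h : Tr c s a b x y z u) (T : ℝ) :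
    IE a b (fun t => RZ c s (x t) (y t) (z t) (T - t))
      (fun t => -((1 - u t) * (c ^ 2 * s * y t + s ^ 3 * y t * cos (T - t)
        - s ^ 2 * z t * sin (T - t)))) := by
  refine (h.IE_lin (φ := fun t => c * s - c * s * cos (T - t)) (φ' := fun t => -(c * s * sin (T - t)))
    (ψ := fun t => s * sin (T - t)) (ψ' := fun t => s * -cos (T - t))
    (χ := fun t => c ^ 2 + s ^ 2 * cos (T - t)) (χ' := fun t => s ^ 2 * sin (T - t))
    (fun t => ((hd_cos T t).const_mul _).const_sub _) (by fun_prop)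
    (fun t => (hd_sin T t).const_mul _) (by fun_prop)
    (fun t => ((hd_cos T t).const_mul _).const_add _) (by fun_prop)).congr h.hab
    (fun t _ => ?_) (fun t _ => ?_)
  · simp only [RZ]; ring
  · linear_combination (-s * y t * cos (T - t)) * hcs
end


/-- weighted mean estimate -/
lemma mean_est {σ S : ℝ} (h : σ ≤ S) {w q : ℝ → ℝ} (hw : IntervalIntegrable w volume σ S)
    (hwq : IntervalIntegrable (fun r => w r * q r) volume σ S)
    (hw0 : ∀ r ∈ Set.Icc σ S, 0 ≤ w r) {m ε : ℝ} (hq : ∀ r ∈ Set.Icc σ S, |q r - m| ≤ ε) :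
    |(∫ r in σ..S, w r * q r) - m * ∫ r in σ..S, w r| ≤ ε * ∫ r in σ..S, w r := by
  have e : (∫ r in σ..S, w r * q r) - m * ∫ r in σ..S, w r = ∫ r in σ..S, (w r * q r - m * w r) := by
    rw [intervalIntegral.integral_sub hwq (hw.const_mul m), intervalIntegral.integral_const_mul]
  rw [e, ← intervalIntegral.integral_const_mul]
  rw [← Real.norm_eq_abs]
  refine intervalIntegral.norm_integral_le_of_norm_le h ?_ (hw.const_mul ε)
  refine Filter.Eventually.of_forall fun r hr => ?_
  have hr' : r ∈ Set.Icc σ S := ⟨hr.1.le, hr.2⟩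
  rw [Real.norm_eq_abs, show w r * q r - m * w r = w r * (q r - m) by ring, abs_mul,
    abs_of_nonneg (hw0 r hr'), mul_comm]
  exact mul_le_mul_of_nonneg_right (hq r hr') (hw0 r hr')

def Pert (c s T1 l1 l2 : ℝ) : Prop :=
  ∃ K > 0, ∃ δ > 0, ∀ ε > 0, ∃ ρ, 0 < ρ ∧ ρ < ε ∧ ∃ Y1 Y2 Y3 : ℝ, Y1 ^ 2 + Y2 ^ 2 + Y3 ^ 2 = 1 ∧
    |Y1 - (l1 - ρ * K * l2)| ≤ ε * ρ ∧ |Y2 - (l2 + ρ * K * l1)| ≤ ε * ρ ∧ |Y3| ≤ 2 * ρ ∧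
    ∀ τ, -δ ≤ τ → Reach c s (T1 + τ) 0 0 1 (RX c s Y1 Y2 Y3 τ) (RY c s Y1 Y2 Y3 τ) (RZ c s Y1 Y2 Y3 τ)

set_option maxHeartbeats 1000000 in
theorem pert_core {c s a S0 ℓ0 l1 l2 : ℝ} {x y z u : ℝ → ℝ} (hcs : c ^ 2 + s ^ 2 = 1)
    (hs : 0 < s) (hsc : s < c) (h : Tr c s a S0 x y z u) (hx : x a = 0) (hy : y a = 0) (hz : z a = 1)
    (hℓ0 : 0 < ℓ0) (hl1 : RX c s (x S0) (y S0) (z S0) ℓ0 = l1)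
    (hl2 : RY c s (x S0) (y S0) (z S0) ℓ0 = l2) (hl3 : RZ c s (x S0) (y S0) (z S0) ℓ0 = 0)
    (hzp : ∀ t ∈ Set.Icc a S0, 0 < z t)
    (hzr : ∀ τ, 0 ≤ τ → τ < ℓ0 → 0 < RZ c s (x S0) (y S0) (z S0) τ) :
    Pert c s (S0 + ℓ0 - a) l1 l2 := by
  have hc : 0 < c := hs.trans hsc
  set T := S0 + ℓ0 with hT
  have haS0 : a ≤ S0 := h.hab
  have hX := h.YX hcs T
  have hY := h.YY hcs T
  have hZ := h.YZ hcs T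
  have mS0 : S0 ∈ Set.Icc a S0 := ⟨haS0, le_rfl⟩
  have ma : a ∈ Set.Icc a S0 := ⟨le_rfl, haS0⟩
  have hTS0 : T - S0 = ℓ0 := by rw [hT]; ring
  have iu1 : ∀ {q : ℝ → ℝ}, ContinuousOn q (Set.Icc a S0) → ∀ {t t'}, t ∈ Set.Icc a S0 →
      t' ∈ Set.Icc a S0 → IntervalIntegrable (fun r => (1 - u r) * q r) volume t t' := by
    intro q hq t t' ht ht'
    have i1 := intg_mul haS0 h.um h.ub hq
    have i2 : IntervalIntegrable q volume a S0 :=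
      ContinuousOn.intervalIntegrable (by rwa [Set.uIcc_of_le haS0])
    have i3 : IntervalIntegrable (fun r => (1 - u r) * q r) volume a S0 := by
      refine (i2.sub i1).congr fun r _ => ?_
      ring
    refine i3.mono_set ?_
    rw [Set.uIcc_of_le haS0]
    exact Set.uIcc_subset_Icc ht ht'
  have iu : ∀ {t t'}, t ∈ Set.Icc a S0 →
      t' ∈ Set.Icc a S0 → IntervalIntegrable (fun r => (1 - u r)) volume t t' := by
    intro t t' ht ht'
    simpa using iu1 (q := fun _ => 1) continuousOn_const ht ht'
  have w0 : ∀ r ∈ Set.Icc a S0, 0 ≤ 1 - u r := fun r hr => by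
    have := (abs_le.1 (h.ub r hr)).2; linarith
  set I : ℝ → ℝ := fun σ => ∫ r in σ..S0, (1 - u r) with hI
  have Icont : ContinuousOn I (Set.Icc a S0) := by
    have h1 : ContinuousOn (fun σ => ∫ r in S0..σ, (1 - u r)) (Set.uIcc a S0) :=
      continuousOn_primitive_interval' (iu ma mS0) (by rw [Set.uIcc_of_le haS0]; exact mS0)
    rw [Set.uIcc_of_le haS0] at h1
    refine h1.neg.congr fun σ _ => ?_
    rw [hI]; exact integral_symm _ _
  have I0 : ∀ σ ∈ Set.Icc a S0, 0 ≤ I σ := fun σ hσ =>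
    integral_nonneg hσ.2 fun r hr => w0 r ⟨hσ.1.trans hr.1, hr.2⟩
  set Z : Set ℝ := Set.Icc a S0 ∩ I ⁻¹' {0} with hZdef
  have Zcl : IsClosed Z := Icont.preimage_isClosed_of_isClosed isClosed_Icc isClosed_singleton
  have Zne : Z.Nonempty := ⟨S0, mS0, by simp [hI]⟩
  have Zbd : BddBelow Z := ⟨a, fun r hr => hr.1.1⟩
  set S := sInf Z with hS
  have SZ : S ∈ Z := Zcl.csInf_mem Zne Zbd
  have mS : S ∈ Set.Icc a S0 := SZ.1
  have IS : I S = 0 := SZ.2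
  -- u = 1 a.e. on [S,S0]
  have hconst : ∀ {q : ℝ → ℝ}, ContinuousOn q (Set.Icc a S0) → ∀ σ ∈ Set.Icc S S0,
      ∫ r in σ..S0, (1 - u r) * q r = 0 := by
    intro q hq σ hσ
    have mσ : σ ∈ Set.Icc a S0 := ⟨mS.1.trans hσ.1, hσ.2⟩
    have Iσ : I σ = 0 := by
      refine le_antisymm ?_ (I0 σ mσ)
      have e : I S = (∫ r in S..σ, (1 - u r)) + I σ :=
        (integral_add_adjacent_intervals (iu mS mσ) (iu mσ mS0)).symm
      have : 0 ≤ ∫ r in S..σ, (1 - u r) :=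
        integral_nonneg hσ.1 fun r hr => w0 r ⟨mS.1.trans hr.1, hr.2.trans hσ.2⟩
      linarith
    have hae : (fun r => 1 - u r) =ᵐ[volume.restrict (Set.Ioc σ S0)] 0 := by
      refine (integral_eq_zero_iff_of_le_of_nonneg_ae hσ.2 ?_ (iu mσ mS0)).1 Iσ
      filter_upwards [ae_restrict_mem measurableSet_Ioc] with r hr
      exact w0 r ⟨mσ.1.trans hr.1.le, hr.2⟩
    have : ∫ r in σ..S0, (1 - u r) * q r = ∫ r in σ..S0, (0:ℝ) := by
      refine integral_congr_ae_restrict ?_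
      rw [Set.uIoc_of_le hσ.2]
      filter_upwards [hae] with r hr
      rw [show (1 - u r) = 0 from hr]; simp
    rw [this]; simp
  have cx := h.ex.1
  have cy := h.ey.1
  have cz := h.ez.1
  set q1 : ℝ → ℝ := fun t => c * s * (s * y t * (1 - cos (T - t)) + z t * sin (T - t)) with hq1
  set q2 : ℝ → ℝ := fun t => -s * (s * y t * sin (T - t) + z t * cos (T - t)) with hq2
  set q3 : ℝ → ℝ := fun t => c ^ 2 * s * y t + s ^ 3 * y t * cos (T - t)
        - s ^ 2 * z t * sin (T - t) with hq3
  have cq1 : ContinuousOn q1 (Set.Icc a S0) := by rw [hq1]; fun_prop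
  have cq2 : ContinuousOn q2 (Set.Icc a S0) := by rw [hq2]; fun_prop
  have cq3 : ContinuousOn q3 (Set.Icc a S0) := by rw [hq3]; fun_prop
  have Lx : ∀ σ ∈ Set.Icc S S0, RX c s (x σ) (y σ) (z σ) (T - σ) = l1 := by
    intro σ hσ
    have e := hX.diff (t := σ) (t' := S0) ⟨mS.1.trans hσ.1, hσ.2⟩ mS0
    rw [intervalIntegral.integral_neg, hconst cq1 σ hσ] at e
    rw [hTS0, hl1] at e; linarith
  have Ly : ∀ σ ∈ Set.Icc S S0, RY c s (x σ) (y σ) (z σ) (T - σ) = l2 := by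
    intro σ hσ
    have e := hY.diff (t := σ) (t' := S0) ⟨mS.1.trans hσ.1, hσ.2⟩ mS0
    rw [intervalIntegral.integral_neg, hconst cq2 σ hσ] at e
    rw [hTS0, hl2] at e; linarith
  have Lz : ∀ σ ∈ Set.Icc S S0, RZ c s (x σ) (y σ) (z σ) (T - σ) = 0 := by
    intro σ hσ
    have e := hZ.diff (t := σ) (t' := S0) ⟨mS.1.trans hσ.1, hσ.2⟩ mS0
    rw [intervalIntegral.integral_neg, hconst cq3 σ hσ] at e
    rw [hTS0, hl3] at e; linarith
  have zL : ∀ σ ∈ Set.Icc S S0, z σ = RZ c s l1 l2 0 (σ - T) := by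
    intro σ hσ
    have e := R_add_Z hcs (x σ) (y σ) (z σ) (T - σ) (σ - T)
    rw [Lx σ hσ, Ly σ hσ, Lz σ hσ, show T - σ + (σ - T) = 0 by ring, RZ_zero hcs] at e
    exact e.symm
  have yL : ∀ σ ∈ Set.Icc S S0, y σ = RY c s l1 l2 0 (σ - T) := by
    intro σ hσ
    have e := R_add_Y hcs (x σ) (y σ) (z σ) (T - σ) (σ - T)
    rw [Lx σ hσ, Ly σ hσ, Lz σ hσ, show T - σ + (σ - T) = 0 by ring, RY_zero] at e
    exact e.symm
  have SS : S ∈ Set.Icc S S0 := ⟨le_rfl, mS.2⟩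
  -- S > a
  have haS : a < S := by
    rcases mS.1.eq_or_lt with e | e
    · exfalso
      have e1 := Lz S SS
      rw [← e, hx, hy, hz] at e1
      simp only [RZ] at e1
      have := cos_le_one (T - a)
      have h5 : c ^ 2 + s ^ 2 * cos (T - a) = 0 := by linear_combination e1
      have h6 := neg_one_le_cos (T - a)
      nlinarith [sq_nonneg s, mul_pos hs (sub_pos.2 hsc), mul_pos hc (sub_pos.2 hsc)]
    · exact e
  have hl0 : 0 < T - S := by rw [hT]; linarith [mS.2]
  have hl2π : T - S < 2 * π := by
    by_contra hcon
    push Not at hcon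
    have per : RZ c s l1 l2 0 (-(2 * π)) = 0 := by
      have : RZ c s l1 l2 0 (-(2 * π)) = RZ c s l1 l2 0 0 := by simp [RZ]
      rw [this, RZ_zero hcs]
    rcases le_or_gt (T - 2 * π) S0 with e | e
    · have m : T - 2 * π ∈ Set.Icc S S0 := ⟨by linarith, e⟩
      have e1 := zL _ m
      rw [show T - 2 * π - T = -(2 * π) by ring, per] at e1
      have := hzp _ ⟨mS.1.trans m.1, m.2⟩
      linarith
    · have e2 := R_add_Z hcs (x S0) (y S0) (z S0) ℓ0 (-(2 * π))
      rw [hl1, hl2, hl3, per] at e2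
      have := hzr (ℓ0 + -(2 * π)) (by rw [hT] at e; linarith) (by linarith [pi_pos])
      linarith
  have hcosl : cos (T - S) < 1 := by
    refine lt_of_le_of_ne (cos_le_one _) fun e => ?_
    have := (cos_eq_one_iff_of_lt_of_lt (by linarith) hl2π).1 e
    linarith
  set K := c * s ^ 2 * (1 - cos (T - S)) with hK
  have K0 : 0 < K := mul_pos (by positivity) (by linarith)
  have q1S : q1 S = - K * l2 := by
    simp only [hq1, hK]
    rw [yL S SS, zL S SS]
    simp only [RY, RZ, show S - T = -(T - S) by ring, cos_neg, sin_neg]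
    have := sin_sq_add_cos_sq (T - S)
    linear_combination (-c * s ^ 2 * l2) * this
  have q2S : q2 S = K * l1 := by
    simp only [hq2, hK]
    rw [yL S SS, zL S SS]
    simp only [RY, RZ, show S - T = -(T - S) by ring, cos_neg, sin_neg]
    have := sin_sq_add_cos_sq (T - S)
    linear_combination (c * s ^ 2 * l1) * this
  refine ⟨K, K0, ℓ0, hℓ0, fun ε hε => ?_⟩
  -- choose σ
  have ev : ∀ᶠ σ in nhdsWithin S (Set.Icc a S0), |q1 σ - q1 S| ≤ ε ∧ |q2 σ - q2 S| ≤ ε ∧ I σ < ε := by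
    have e1 := (cq1 S mS).sub_const (q1 S) |>.abs
    have e2 := (cq2 S mS).sub_const (q2 S) |>.abs
    have e3 := Icont S mS
    simp only [ContinuousWithinAt] at e1 e2 e3
    rw [sub_self, abs_zero] at e1 e2
    rw [IS] at e3
    filter_upwards [e1.eventually (ge_mem_nhds hε), e2.eventually (ge_mem_nhds hε),
      e3.eventually (gt_mem_nhds hε)] with σ a1 a2 a3 using ⟨a1, a2, a3⟩
  obtain ⟨δ, hδ, hev⟩ := Metric.mem_nhdsWithin_iff.1 ev
  obtain ⟨σ, hσ1, hσ2⟩ : ∃ σ, max a (S - δ) < σ ∧ σ < S :=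
    exists_between (max_lt haS (by linarith))
  have hσa : a < σ := (le_max_left _ _).trans_lt hσ1
  have hσδ : S - δ < σ := (le_max_right _ _).trans_lt hσ1
  have mσ : σ ∈ Set.Icc a S0 := ⟨hσa.le, hσ2.le.trans mS.2⟩
  have near : ∀ r ∈ Set.Icc σ S, |q1 r - q1 S| ≤ ε ∧ |q2 r - q2 S| ≤ ε ∧ I r < ε := by
    intro r hr
    refine hev ⟨?_, hσa.le.trans hr.1, hr.2.trans mS.2⟩
    rw [Metric.mem_ball, Real.dist_eq, abs_lt]
    constructor <;> linarith [hr.1, hr.2]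
  set ρ := ∫ r in σ..S, (1 - u r) with hρ
  have ρI : I σ = ρ := by
    have e : I σ = ρ + I S := (integral_add_adjacent_intervals (iu mσ mS) (iu mS mS0)).symm
    rw [e, IS, add_zero]
  have ρ0 : 0 < ρ := by
    rw [← ρI]
    refine lt_of_le_of_ne (I0 σ mσ) fun e => ?_
    have : S ≤ σ := csInf_le Zbd ⟨mσ, e.symm⟩
    linarith
  have wS : ∀ r ∈ Set.Icc σ S, 0 ≤ 1 - u r := fun r hr => w0 r ⟨hσa.le.trans hr.1, hr.2.trans mS.2⟩
  have m1 := mean_est hσ2.le (iu mσ mS) (iu1 cq1 mσ mS) wS (fun r hr => (near r hr).1)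
  have m2 := mean_est hσ2.le (iu mσ mS) (iu1 cq2 mσ mS) wS (fun r hr => (near r hr).2.1)
  have m3 := mean_est hσ2.le (iu mσ mS) (iu1 cq3 mσ mS) wS (m := 0) (ε := 2) (fun r hr => by
    have hr' : r ∈ Set.Icc a S0 := ⟨hσa.le.trans hr.1, hr.2.trans mS.2⟩
    have sp := h.sph r hr'
    have hyr : |y r| ≤ 1 := abs_le_one_iff_mul_self_le_one.2 (by nlinarith [sq_nonneg (x r), sq_nonneg (z r)])
    have hzr' : |z r| ≤ 1 := abs_le_one_iff_mul_self_le_one.2 (by nlinarith [sq_nonneg (x r), sq_nonneg (y r)])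
    have s1 : s ≤ 1 := by nlinarith
    rw [sub_zero]
    have b1 : |c ^ 2 * s * y r| ≤ c ^ 2 * s := by
      rw [abs_mul, abs_of_pos (by positivity)]; exact mul_le_of_le_one_right (by positivity) hyr
    have b2 : |s ^ 3 * y r * cos (T - r)| ≤ s ^ 3 := by
      rw [mul_assoc, abs_mul, abs_of_pos (by positivity), abs_mul]
      exact mul_le_of_le_one_right (by positivity) (mul_le_one₀ hyr (abs_nonneg _) (abs_cos_le_one _))
    have b3 : |s ^ 2 * z r * sin (T - r)| ≤ s ^ 2 := by
      rw [mul_assoc, abs_mul, abs_of_pos (by positivity), abs_mul]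
      exact mul_le_of_le_one_right (by positivity) (mul_le_one₀ hzr' (abs_nonneg _) (abs_sin_le_one _))
    have b4 := (abs_sub (c ^ 2 * s * y r + s ^ 3 * y r * cos (T - r)) (s ^ 2 * z r * sin (T - r)))
    have b5 := (abs_add_le (c ^ 2 * s * y r) (s ^ 3 * y r * cos (T - r)))
    have : c ^ 2 * s + s ^ 3 = s := by linear_combination s * hcs
    simp only [hq3]
    nlinarith)
  have d1 := hX.diff mσ mS
  have d2 := hY.diff mσ mS
  have d3 := hZ.diff mσ mS
  rw [intervalIntegral.integral_neg] at d1 d2 d3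
  rw [Lx S SS] at d1
  rw [Ly S SS] at d2
  rw [Lz S SS] at d3
  rw [← hρ] at m1 m2 m3
  rw [q1S] at m1
  rw [q2S] at m2
  refine ⟨ρ, ρ0, by rw [← ρI]; exact (near σ ⟨le_rfl, hσ2.le⟩).2.2,
    RX c s (x σ) (y σ) (z σ) (T - σ), RY c s (x σ) (y σ) (z σ) (T - σ),
    RZ c s (x σ) (y σ) (z σ) (T - σ), ?_, ?_, ?_, ?_, ?_⟩
  rotate_left 4
  · intro τ hτ
    have r1 := h.reach le_rfl hσa.le mσ.2
    have e0 : 0 ≤ T - σ + τ := by rw [hT]; linarith [mσ.2]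
    have r2 := rot_Reach hcs (h.sph σ mσ) e0
    rw [← R_add_X hcs (x σ), ← R_add_Y hcs (x σ), ← R_add_Z hcs (x σ)] at r2
    have := r1.trans r2
    rw [hx, hy, hz] at this
    rwa [show σ - a + (T - σ + τ) = T - a + τ by ring] at this
  · rw [R_sph hcs, h.sph σ mσ]
  · have : RX c s (x σ) (y σ) (z σ) (T - σ) = l1 + ∫ r in σ..S, (1 - u r) * q1 r := by linarith
    rw [this]; convert m1 using 2; ring
  · have : RY c s (x σ) (y σ) (z σ) (T - σ) = l2 + ∫ r in σ..S, (1 - u r) * q2 r := by linarith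
    rw [this]; convert m2 using 2; ring
  · have : RZ c s (x σ) (y σ) (z σ) (T - σ) = ∫ r in σ..S, (1 - u r) * q3 r := by linarith
    rw [this]; simpa using m3


lemma IE.hasDerivAt {a b : ℝ} {f g : ℝ → ℝ} (h : IE a b f g) (hg : ContinuousOn g (Set.Icc a b))
    {t : ℝ} (ht : t ∈ Set.Ioo a b) : HasDerivAt f (g t) t := by
  have hn : Set.Icc a b ∈ nhds t := Icc_mem_nhds ht.1 ht.2
  have ha : a ∈ Set.Icc a b := ⟨le_rfl, (ht.1.trans ht.2).le⟩
  have h1 : HasDerivAt (fun t => ∫ r in a..t, g r) (g t) t := by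
    refine integral_hasDerivAt_right (h.intg ha ⟨ht.1.le, ht.2.le⟩) ?_ (hg.continuousAt hn)
    exact ContinuousOn.stronglyMeasurableAtFilter_nhdsWithin hg measurableSet_Icc t |>.filter_mono
      (by rw [nhdsWithin_eq_nhds.2 hn])
  refine (h1.const_add (f a)).congr_of_eventuallyEq ?_
  filter_upwards [hn] with r hr using h.2.2 r hr

lemma CL {t0 t1 κ m R : ℝ} (h01 : t0 ≤ t1) (hκ : 0 < κ) (hR : 0 < R) {x x' : ℝ → ℝ}
    (hc : ContinuousOn x (Set.Icc t0 t1)) (hd : ∀ t ∈ Set.Ioo t0 t1, HasDerivAt x (x' t) t)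
    (hp : ∀ t ∈ Set.Ioo t0 t1, 0 < x' t)
    (hb : ∀ t ∈ Set.Ioo t0 t1, x' t ^ 2 ≤ κ ^ 2 * (R ^ 2 - (x t - m) ^ 2)) :
    arccos ((x t0 - m) / R) - arccos ((x t1 - m) / R) ≤ κ * (t1 - t0) := by
  have key : MonotoneOn (fun t => arccos ((x t - m) / R) + κ * t) (Set.Icc t0 t1) := by
    have hder : ∀ t ∈ Set.Ioo t0 t1, ∃ D, 0 ≤ D ∧
        HasDerivAt (fun t => arccos ((x t - m) / R) + κ * t) D t := by
      intro t ht
      have h1 := hb t ht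
      have h2 := hp t ht
      have h3 : 0 < R ^ 2 - (x t - m) ^ 2 := by
        by_contra hcon
        push Not at hcon
        nlinarith [mul_nonneg (sq_nonneg κ) (neg_nonneg.2 hcon), pow_pos h2 2]
      have h4 : ((x t - m) / R) ^ 2 < 1 := by
        rw [div_pow, div_lt_one (by positivity)]; linarith
      have h5 := abs_lt.1 ((sq_lt_one_iff_abs_lt_one _).1 h4)
      have e := (hasDerivAt_arccos h5.1.ne' h5.2.ne).comp t (((hd t ht).sub_const m).div_const R)
      have e2 := e.add ((hasDerivAt_id t).const_mul κ)
      refine ⟨_, ?_, e2⟩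
      have h6 : √(1 - ((x t - m) / R) ^ 2) = √(R ^ 2 - (x t - m) ^ 2) / R := by
        rw [show 1 - ((x t - m) / R) ^ 2 = (R ^ 2 - (x t - m) ^ 2) / R ^ 2 by field_simp,
          sqrt_div' _ (by positivity), sqrt_sq hR.le]
      have h7 : 0 < √(R ^ 2 - (x t - m) ^ 2) := sqrt_pos.2 h3
      have h8 : x' t ≤ κ * √(R ^ 2 - (x t - m) ^ 2) := by
        refine abs_le_of_sq_le_sq' ?_ (by positivity) |>.2
        rw [mul_pow, sq_sqrt h3.le]; exact h1
      rw [h6]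
      have h9 : x' t / √(R ^ 2 - (x t - m) ^ 2) ≤ κ := by rwa [div_le_iff₀ h7]
      have h10 : -(1 / (√(R ^ 2 - (x t - m) ^ 2) / R)) * (x' t / R) =
          - (x' t / √(R ^ 2 - (x t - m) ^ 2)) := by field_simp
      rw [h10]; simp; linarith
    refine monotoneOn_of_deriv_nonneg (convex_Icc _ _) ?_ ?_ ?_
    · exact (continuous_arccos.comp_continuousOn ((hc.sub continuousOn_const).div_const R)).add
        (by fun_prop)
    · rw [interior_Icc]
      intro t ht
      obtain ⟨D, _, hD⟩ := hder t ht
      exact hD.differentiableAt.differentiableWithinAt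
    · rw [interior_Icc]
      intro t ht
      obtain ⟨D, h0, hD⟩ := hder t ht
      rw [hD.deriv]; exact h0
  have := key ⟨le_rfl, h01⟩ ⟨h01, le_rfl⟩ h01
  simp only at this
  linarith

section
variable {c s a b : ℝ} {x y z u : ℝ → ℝ}

lemma Tr.x_deriv (h : Tr c s a b x y z u) {t : ℝ} (ht : t ∈ Set.Ioo a b) :
    HasDerivAt x (-(c * y t)) t :=
  h.ex.hasDerivAt (by have := h.ey.1; fun_prop) ht

lemma Tr.x_strictMono (hc : 0 < c) (h : Tr c s a b x y z u) (hy : ∀ t ∈ Set.Ioo a b, y t < 0) :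
    StrictMonoOn x (Set.Icc a b) := by
  refine strictMonoOn_of_deriv_pos (convex_Icc _ _) h.ex.1 ?_
  rw [interior_Icc]
  intro t ht
  rw [(h.x_deriv ht).deriv]
  nlinarith [hy t ht]

/-- `h = s x + c z` is monotone where `y ≤ 0`. -/
lemma Tr.h_mono (hs : 0 < s) (hc : 0 < c) (h : Tr c s a b x y z u)
    (hy : ∀ t ∈ Set.Icc a b, y t ≤ 0) : ∀ t ∈ Set.Icc a b, s * x a + c * z a ≤ s * x t + c * z t := by
  intro t ht
  have ma : a ∈ Set.Icc a b := ⟨le_rfl, h.hab⟩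
  have e1 := h.ex.diff ma ht
  have e2 := h.ez.diff ma ht
  have i1 := (h.ex.intg ma ht).const_mul s
  have i2 := (h.ez.intg ma ht).const_mul c
  have : 0 ≤ ∫ r in a..t, (s * -(c * y r) + c * (u r * (s * y r))) := by
    refine integral_nonneg_of_ae_restrict ht.1 ?_
    filter_upwards [ae_restrict_mem measurableSet_Icc] with r hr
    have hy' := hy r ⟨hr.1, hr.2.trans ht.2⟩
    have hu := (abs_le.1 (h.ub r ⟨hr.1, hr.2.trans ht.2⟩)).2
    have : s * -(c * y r) + c * (u r * (s * y r)) = (s * c) * ((-y r) * (1 - u r)) := by ring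
    simp only [Pi.zero_apply]
    rw [this]
    have h1 : 0 ≤ -y r := by linarith
    have h2 : 0 ≤ 1 - u r := by linarith
    positivity
  rw [intervalIntegral.integral_add i1 i2, intervalIntegral.integral_const_mul,
    intervalIntegral.integral_const_mul, ← e1, ← e2] at this
  linarith

lemma nonpos_of_Ioo {t0 t1 : ℝ} (hlt : t0 < t1) {f : ℝ → ℝ} (hf : ContinuousOn f (Set.Icc t0 t1))
    (h : ∀ t ∈ Set.Ioo t0 t1, f t ≤ 0) : ∀ t ∈ Set.Icc t0 t1, f t ≤ 0 := by
  have h1 : Set.Icc t0 t1 = closure (Set.Ioo t0 t1) := (closure_Ioo hlt.ne).symm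
  intro t ht
  have := ContinuousOn.image_closure (f := f) (s := Set.Ioo t0 t1) (by rwa [← h1])
  have h2 : f t ∈ closure (f '' Set.Ioo t0 t1) := this ⟨t, by rwa [← h1], rfl⟩
  have h3 : closure (f '' Set.Ioo t0 t1) ⊆ Set.Iic 0 :=
    closure_minimal (by rintro _ ⟨r, hr, rfl⟩; exact h r hr) isClosed_Iic
  exact h3 h2

lemma sin_neg_arccos' {p q : ℝ} (h : p ^ 2 + q ^ 2 = 1) (hq : q ≤ 0) : sin (-arccos p) = q := by
  rw [sin_neg, sin_arccos, show 1 - p ^ 2 = (-q) ^ 2 by linarith, sqrt_sq (by linarith)]; ring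

set_option maxHeartbeats 8000000 in
theorem sheet {t0 t1 : ℝ} (hcs : c ^ 2 + s ^ 2 = 1) (hs : 0 < s) (hc : 0 < c)
    (h : Tr c s t0 t1 x y z u) (hlt : t0 < t1)
    (hy : ∀ t ∈ Set.Ioo t0 t1, y t < 0) (hz1 : z t1 = 0) (hz0 : 0 < z t0) :
    ∃ tL > 0, ∃ tR ≥ 0, tL + tR ≤ t1 - t0 ∧ ∃ θ, -π < θ ∧ θ + c * tR ≤ 0 ∧
      RX c s (x t0) (y t0) (z t0) tL = cos θ ∧ RY c s (x t0) (y t0) (z t0) tL = sin θ ∧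
      RZ c s (x t0) (y t0) (z t0) tL = 0 ∧
      (∀ τ, 0 ≤ τ → τ < tL → 0 < RZ c s (x t0) (y t0) (z t0) τ) ∧
      cos (θ + c * tR) = x t1 ∧ sin (θ + c * tR) = y t1 := by
  have m0 : t0 ∈ Set.Icc t0 t1 := ⟨le_rfl, h.hab⟩
  have m1 : t1 ∈ Set.Icc t0 t1 := ⟨h.hab, le_rfl⟩
  have hyI := nonpos_of_Ioo hlt h.ey.1 (fun t ht => (hy t ht).le)
  have hm := h.h_mono hs hc hyI
  have xs := h.x_strictMono hc hy
  set x0 := x t0 with hx0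
  set y0 := y t0 with hy0
  set z0 := z t0 with hz0'
  set h0 := s * x0 + c * z0 with hh0
  set p1 := x t1 with hp1
  have sp0 : x0 ^ 2 + y0 ^ 2 + z0 ^ 2 = 1 := h.sph t0 m0
  have sp1 : p1 ^ 2 + y t1 ^ 2 = 1 := by have := h.sph t1 m1; rw [hz1] at this; linarith
  have hp1b : -1 ≤ p1 ∧ p1 ≤ 1 :=
    abs_le.1 ((sq_le_one_iff_abs_le_one _).1 (by linarith [sq_nonneg (y t1)]))
  have hp1le : p1 ≤ 1 := hp1b.2
  have hp1ge : -1 ≤ p1 := hp1b.1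
  have hx0ge : -1 ≤ x0 :=
    (abs_le.1 ((sq_le_one_iff_abs_le_one _).1 (by linarith [sq_nonneg y0, sq_nonneg z0]))).1
  have h0p : h0 ≤ s * p1 := by have := hm t1 m1; rw [hz1] at this; linarith
  have h0s : h0 ≤ s := by have := mul_le_mul_of_nonneg_left hp1le hs.le; linarith
  have h0s' : -s < h0 := by
    have : 0 < c * z0 := mul_pos hc hz0
    have : -s ≤ s * x0 := by have := mul_le_mul_of_nonneg_left hx0ge hs.le; linarith
    linarith
  have h0sq : h0 ^ 2 ≤ s ^ 2 := sq_le_sq' h0s'.le h0s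
  have r2pos : 0 < 1 - h0 ^ 2 := by linarith [pow_pos hc 2]
  set r := √(1 - h0 ^ 2) with hr
  have r0 : 0 < r := sqrt_pos.2 r2pos
  have rsq : r ^ 2 = 1 - h0 ^ 2 := sq_sqrt r2pos.le
  set A := c * x0 - s * z0 with hA
  have AB : A ^ 2 + y0 ^ 2 = r ^ 2 := by
    rw [rsq, hA, hh0]; linear_combination sp0 + (x0 ^ 2 + z0 ^ 2) * hcs
  have hy0le : y0 ≤ 0 := hyI t0 m0
  -- angles
  have ABr : (A / r) ^ 2 + (y0 / r) ^ 2 = 1 := by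
    rw [div_pow, div_pow, ← add_div, AB, div_self (by positivity)]
  have Ar : -1 ≤ A / r ∧ A / r ≤ 1 := by
    exact abs_le.1 ((sq_le_one_iff_abs_le_one _).1 (by linarith [sq_nonneg (y0 / r)]))
  set ξ0 := - arccos (A / r) with hξ0
  have cosξ0 : r * cos ξ0 = A := by
    rw [hξ0, cos_neg, cos_arccos Ar.1 Ar.2]; field_simp
  have sinξ0 : r * sin ξ0 = y0 := by
    rw [hξ0, sin_neg_arccos' ABr (div_nonpos_of_nonpos_of_nonneg hy0le r0.le)]; field_simp
  set v := c * h0 / (s * r) with hv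
  have vsq : v ^ 2 ≤ 1 := by
    rw [hv, div_pow, div_le_one (by positivity), mul_pow, mul_pow, rsq]
    have : c ^ 2 * h0 ^ 2 + s ^ 2 * h0 ^ 2 = h0 ^ 2 := by linear_combination h0 ^ 2 * hcs
    linarith
  have hv1 : -1 ≤ v ∧ v ≤ 1 := abs_le.1 ((sq_le_one_iff_abs_le_one _).1 vsq)
  set ξL := - arccos v with hξL
  have cosξL : cos ξL = v := by rw [hξL, cos_neg, cos_arccos hv1.1 hv1.2]
  have Av : A / r < v := by
    rw [hv, div_lt_div_iff₀ r0 (by positivity)]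
    have : s * A < c * h0 := by
      have e : c * h0 - s * A = z0 := by rw [hh0, hA]; linear_combination z0 * hcs
      linarith
    have := mul_lt_mul_of_pos_right this r0
    linarith
  have hLpos : ξ0 < ξL := by
    have := strictAntiOn_arccos ⟨Ar.1, Ar.2⟩ ⟨hv1.1, hv1.2⟩ Av
    rw [hξ0, hξL]; linarith
  have ex1 : ∀ t, (c * x0 - s * z0) * cos t - y0 * sin t = r * cos (ξ0 + t) := by
    intro t; rw [cos_add, ← hA, ← cosξ0, ← sinξ0]; ring
  have ex2 : ∀ t, RY c s x0 y0 z0 t = r * sin (ξ0 + t) := by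
    intro t; rw [sin_add, RY, ← hA, ← cosξ0, ← sinξ0]; ring
  have ex3 : ∀ t, RX c s x0 y0 z0 t = s * h0 + c * (r * cos (ξ0 + t)) := by
    intro t; rw [RX, ex1]
  have ex4 : ∀ t, RZ c s x0 y0 z0 t = c * h0 - s * (r * cos (ξ0 + t)) := by
    intro t; rw [RZ, ex1]
  have hadd : ξ0 + (ξL - ξ0) = ξL := by ring
  have hrv : s * (r * v) = c * h0 := by rw [hv]; field_simp
  set xL := h0 / s with hxL
  have sxL : s * xL = h0 := by rw [hxL]; field_simp
  have RXL : RX c s x0 y0 z0 (ξL - ξ0) = xL := by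
    rw [ex3, hadd, cosξL]
    have : s * (s * h0 + c * (r * v)) = s * xL := by
      rw [sxL]; linear_combination c * hrv + h0 * hcs
    exact mul_left_cancel₀ hs.ne' this
  have RZL : RZ c s x0 y0 z0 (ξL - ξ0) = 0 := by
    rw [ex4, hadd, cosξL]; linarith
  have RYL : RY c s x0 y0 z0 (ξL - ξ0) ≤ 0 := by
    rw [ex2, hadd]
    refine mul_nonpos_of_nonneg_of_nonpos r0.le (sin_nonpos_of_nonpos_of_neg_pi_le ?_ ?_)
    · rw [hξL]; linarith [arccos_nonneg v]
    · rw [hξL]; linarith [arccos_le_pi v]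
  have xLp : xL ≤ p1 := le_of_mul_le_mul_left (by linarith) hs
  have xLge : -1 < xL := lt_of_mul_lt_mul_left (by linarith : s * (-1) < s * xL) hs.le
  have x0L : x0 < xL := by
    refine lt_of_mul_lt_mul_left (?_ : s * x0 < s * xL) hs.le
    rw [sxL, hh0]; linarith [mul_pos hc hz0]
  have spL := R_sph hcs x0 y0 z0 (ξL - ξ0)
  rw [RXL, RZL, sp0] at spL
  -- crossing time
  obtain ⟨ts, hts, hxts⟩ : ∃ ts ∈ Set.Icc t0 t1, x ts = xL :=
    intermediate_value_Icc hlt.le h.ex.1 ⟨x0L.le, xLp⟩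
  have cl1 := CL (t0 := t0) (t1 := ts) (κ := 1) (m := s * h0) (R := c * r) hts.1 one_pos (by positivity)
    (x := x) (x' := fun t => -(c * y t)) (h.ex.1.mono (Set.Icc_subset_Icc_right hts.2))
    (fun t ht => h.x_deriv ⟨ht.1, ht.2.trans_le hts.2⟩)
    (fun t ht => by linarith [mul_neg_of_pos_of_neg hc (hy t ⟨ht.1, ht.2.trans_le hts.2⟩)])
    (fun t ht => by
      have mt : t ∈ Set.Icc t0 t1 := ⟨ht.1.le, (ht.2.trans_le hts.2).le⟩
      have hxt : x t < xL := by rw [← hxts]; exact xs mt hts ht.2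
      have sp := h.sph t mt
      have e1 := hm t mt
      have e2 : 0 ≤ h0 - s * x t := by linarith [mul_le_mul_of_nonneg_left hxt.le hs.le]
      have e3 : (h0 - s * x t) ^ 2 ≤ (c * z t) ^ 2 := by
        apply sq_le_sq'
        · linarith
        · linarith
      have e4 : (c * r) ^ 2 - (x t - s * h0) ^ 2 = c ^ 2 * (1 - x t ^ 2) - (h0 - s * x t) ^ 2 := by
        rw [mul_pow, rsq]; linear_combination (x t ^ 2 - h0 ^ 2) * hcs
      rw [e4]
      have e5 : (-(c * y t)) ^ 2 = c ^ 2 * (1 - x t ^ 2) - (c * z t) ^ 2 := by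
        linear_combination c ^ 2 * sp
      linarith)
  have cl2 := CL (t0 := ts) (t1 := t1) (κ := c) (m := 0) (R := 1) hts.2 hc one_pos
    (x := x) (x' := fun t => -(c * y t)) (h.ex.1.mono (Set.Icc_subset_Icc_left hts.1))
    (fun t ht => h.x_deriv ⟨hts.1.trans_lt ht.1, ht.2⟩)
    (fun t ht => by linarith [mul_neg_of_pos_of_neg hc (hy t ⟨hts.1.trans_lt ht.1, ht.2⟩)])
    (fun t ht => by
      have mt : t ∈ Set.Icc t0 t1 := ⟨hts.1.trans ht.1.le, ht.2.le⟩
      have sp := h.sph t mt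
      have : c ^ 2 * (1 ^ 2 - (x t - 0) ^ 2) - (-(c * y t)) ^ 2 = c ^ 2 * z t ^ 2 := by
        linear_combination (-c ^ 2) * sp
      have : 0 ≤ c ^ 2 * z t ^ 2 := by positivity
      linarith)
  rw [hxts] at cl1 cl2
  simp only [sub_zero, div_one] at cl2
  have g1 : (x t0 - s * h0) / (c * r) = A / r := by
    rw [div_eq_div_iff (by positivity) r0.ne', hA, hh0]
    linear_combination (-x0 * r) * hcs
  have g2 : (xL - s * h0) / (c * r) = v := by
    rw [hv, hxL, div_eq_div_iff (by positivity) (by positivity)]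
    field_simp
    linear_combination (-h0) * hcs
  rw [g1, g2] at cl1
  refine ⟨ξL - ξ0, by linarith, (arccos xL - arccos p1) / c, ?_, ?_, - arccos xL, ?_, ?_, ?_, ?_, RZL,
    ?_, ?_, ?_⟩
  · exact div_nonneg (sub_nonneg.2 (antitone_arccos xLp)) hc.le
  · have : (arccos xL - arccos p1) / c ≤ t1 - ts := by rw [div_le_iff₀ hc]; linarith
    rw [hξL, hξ0]; linarith
  · have : arccos xL < arccos (-1) := strictAntiOn_arccos ⟨le_rfl, by norm_num⟩ ⟨xLge.le, xLp.trans hp1le⟩ xLge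
    rw [arccos_neg_one] at this; linarith
  · have : c * ((arccos xL - arccos p1) / c) = arccos xL - arccos p1 := by field_simp
    rw [this]; linarith [arccos_nonneg p1]
  · rw [RXL, cos_neg, cos_arccos xLge.le (xLp.trans hp1le)]
  · exact (sin_neg_arccos' (by linarith) RYL).symm
  · intro τ h1 h2
    rw [ex4]
    have : cos (ξ0 + τ) < cos ξL := by
      rw [← cos_neg (ξ0 + τ), ← cos_neg ξL]
      apply strictAntiOn_cos
      · rw [hξL]; simp only [neg_neg]; exact ⟨arccos_nonneg _, arccos_le_pi _⟩
      · constructor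
        · have := arccos_nonneg v; linarith
        · have := arccos_le_pi (A / r); linarith
      · linarith
    rw [cosξL] at this
    rw [← hrv]
    have : 0 < s * (r * (v - cos (ξ0 + τ))) := by
      have : 0 < v - cos (ξ0 + τ) := by linarith
      positivity
    linarith
  · have : c * ((arccos xL - arccos p1) / c) = arccos xL - arccos p1 := by field_simp
    rw [this, show -arccos xL + (arccos xL - arccos p1) = - arccos p1 by ring, cos_neg,
      cos_arccos hp1ge hp1le]
  · have : c * ((arccos xL - arccos p1) / c) = arccos xL - arccos p1 := by field_simp
    rw [this, show -arccos xL + (arccos xL - arccos p1) = - arccos p1 by ring]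
    exact sin_neg_arccos' sp1 (hyI t1 m1)
end


section
variable {c s a b : ℝ} {x y z u : ℝ → ℝ}

lemma cs_bounds (hcs : c ^ 2 + s ^ 2 = 1) (hs : 0 < s) (hc : 0 < c) : s < 1 ∧ c < 1 := by
  constructor
  · exact (abs_lt.1 ((sq_lt_one_iff_abs_lt_one _).1 (by linarith [pow_pos hc 2]))).2
  · exact (abs_lt.1 ((sq_lt_one_iff_abs_lt_one _).1 (by linarith [pow_pos hs 2]))).2

lemma Tr.bx (h : Tr c s a b x y z u) {t : ℝ} (ht : t ∈ Set.Icc a b) : |x t| ≤ 1 :=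
  (sq_le_one_iff_abs_le_one _).1 (by linarith [h.sph t ht, sq_nonneg (y t), sq_nonneg (z t)])
lemma Tr.bnd_y (h : Tr c s a b x y z u) {t : ℝ} (ht : t ∈ Set.Icc a b) : |y t| ≤ 1 :=
  (sq_le_one_iff_abs_le_one _).1 (by linarith [h.sph t ht, sq_nonneg (x t), sq_nonneg (z t)])
lemma Tr.bz (h : Tr c s a b x y z u) {t : ℝ} (ht : t ∈ Set.Icc a b) : |z t| ≤ 1 :=
  (sq_le_one_iff_abs_le_one _).1 (by linarith [h.sph t ht, sq_nonneg (x t), sq_nonneg (y t)])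

lemma IE.lip {f g : ℝ → ℝ} (h : IE a b f g) {C : ℝ} (hg : ∀ t ∈ Set.Icc a b, |g t| ≤ C)
    {t t' : ℝ} (ht : t ∈ Set.Icc a b) (ht' : t' ∈ Set.Icc a b) : |f t' - f t| ≤ C * |t' - t| := by
  rw [h.diff ht ht', ← Real.norm_eq_abs]
  refine intervalIntegral.norm_integral_le_of_norm_le_const fun r hr => ?_
  have : r ∈ Set.Icc a b := Set.uIcc_subset_Icc ht ht' (Set.uIoc_subset_uIcc hr)
  simpa using hg r this

lemma Tr.x_lip (hs : 0 < s) (hc : 0 < c) (hcs : c ^ 2 + s ^ 2 = 1) (h : Tr c s a b x y z u)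
    {t t' : ℝ} (ht : t ∈ Set.Icc a b) (ht' : t' ∈ Set.Icc a b) : |x t' - x t| ≤ 1 * |t' - t| := by
  refine h.ex.lip (fun r hr => ?_) ht ht'
  rw [abs_neg, abs_mul, abs_of_pos hc]
  exact mul_le_one₀ (cs_bounds hcs hs hc).2.le (abs_nonneg _) (h.bnd_y hr)

lemma Tr.y_lip (hs : 0 < s) (hc : 0 < c) (hcs : c ^ 2 + s ^ 2 = 1) (h : Tr c s a b x y z u)
    {t t' : ℝ} (ht : t ∈ Set.Icc a b) (ht' : t' ∈ Set.Icc a b) : |y t' - y t| ≤ 2 * |t' - t| := by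
  refine h.ey.lip (fun r hr => ?_) ht ht'
  have h1 : |c * x r| ≤ 1 := by
    rw [abs_mul, abs_of_pos hc]
    exact mul_le_one₀ (cs_bounds hcs hs hc).2.le (abs_nonneg _) (h.bx hr)
  have h2 : |u r * (s * z r)| ≤ 1 := by
    rw [abs_mul, abs_mul, abs_of_pos hs]
    exact mul_le_one₀ (h.ub r hr) (by positivity)
      (mul_le_one₀ (cs_bounds hcs hs hc).1.le (abs_nonneg _) (h.bz hr))
  have := abs_sub (c * x r) (u r * (s * z r))
  linarith

lemma Tr.x_incr (hc : 0 < c) (h : Tr c s a b x y z u) {m : ℝ} {t t' : ℝ} (ht : t ∈ Set.Icc a b)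
    (ht' : t' ∈ Set.Icc a b) (htt : t ≤ t') (hy : ∀ r ∈ Set.Icc a b, y r ≤ -m) :
    c * m * (t' - t) ≤ x t' - x t := by
  rw [h.ex.diff ht ht']
  have e : c * m * (t' - t) = ∫ r in t..t', c * m := by
    rw [intervalIntegral.integral_const, smul_eq_mul]; ring
  rw [e]
  refine intervalIntegral.integral_mono_on htt (by simp) (h.ex.intg ht ht') fun r hr => ?_
  have := hy r ⟨ht.1.trans hr.1, hr.2.trans ht'.2⟩
  nlinarith

lemma ev_small (C : ℝ) {D : ℝ} (hD : 0 < D) : ∀ᶠ ε in nhdsWithin (0:ℝ) (Set.Ioi 0), C * ε < D := by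
  have : Filter.Tendsto (fun ε : ℝ => C * ε) (nhdsWithin 0 (Set.Ioi 0)) (nhds (C * 0)) :=
    ((continuous_const.mul continuous_id).tendsto 0).mono_left nhdsWithin_le_nhds
  rw [mul_zero] at this
  exact this.eventually (gt_mem_nhds hD)

set_option maxHeartbeats 1000000 in
theorem lemII' {η m T1 l1 l2 : ℝ} (hcs : c ^ 2 + s ^ 2 = 1) (hs : 0 < s) (hc : 0 < c)
    (hP : Pert c s T1 l1 l2) (hη : 0 < η) (hm : 0 < m)
    (h : Tr c s (-η) η x y z u) (hx : x 0 = l1) (hyl : y 0 = l2)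
    (hy : ∀ t ∈ Set.Icc (-η) η, y t ≤ -m)
    (hzp : ∀ t ∈ Set.Icc 0 η, 0 ≤ z t) (hzn : ∀ t ∈ Set.Icc (-η) 0, z t ≤ 0)
    (hopt : ∀ t ∈ Set.Icc (-η) η, ∀ T, Reach c s T 0 0 1 (x t) (y t) (z t) → T1 + t ≤ T) : False := by
  obtain ⟨K, hK, δ, hδ, hP⟩ := hP
  obtain ⟨s1, c1⟩ := cs_bounds hcs hs hc
  have mz : (0:ℝ) ∈ Set.Icc (-η) η := ⟨by linarith, hη.le⟩
  have bl1 : |l1| ≤ 1 := hx ▸ h.bx mz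
  have bl2 : |l2| ≤ 1 := hyl ▸ h.bnd_y mz
  have hl2 : l2 ≤ -m := hyl ▸ hy 0 mz
  set δ' := min δ (min η (m / 4)) with hδ'
  have d1 : δ' ≤ δ := min_le_left _ _
  have d2 : δ' ≤ η := (min_le_right _ _).trans (min_le_left _ _)
  have d3 : δ' ≤ m / 4 := (min_le_right _ _).trans (min_le_right _ _)
  have d0 : 0 < δ' := by simp only [hδ', lt_min_iff]; exact ⟨hδ, hη, by linarith⟩
  set C2 := (K + 3) / (s * c * m) with hC2
  have C20 : 0 < C2 := by positivity
  have sC2 : s * (c * m * C2) = K + 3 := by rw [hC2]; field_simp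
  clear_value δ' C2
  have Km : 0 < K * m := mul_pos hK hm
  obtain ⟨ε, ⟨⟨⟨⟨⟨⟨e1, e2⟩, e3⟩, e4⟩, e5⟩, e6⟩, e7⟩⟩ :=
    ((((((ev_small 1 one_pos).and (ev_small 1 (half_pos Km))).and (ev_small C2 d0)).and
      (ev_small (K + 1) (by linarith : 0 < m / 4))).and
      (ev_small (K + 1 + C2) (by positivity : 0 < c * (m / 4) * δ'))).and
      (ev_small ((K + 1 + 4 * C2) * C2) (half_pos Km))).and self_mem_nhdsWithin |>.exists
  have ε0 : 0 < ε := e7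
  obtain ⟨ρ, ρ0, ρε, Y1, Y2, Y3, sp, b1, b2, b3, hR⟩ := hP ε ε0
  have er : ε * ρ ≤ 1 * ρ := mul_le_mul_of_nonneg_right (by linarith) ρ0.le
  have lt : ∀ C, 0 ≤ C → C * ρ ≤ C * ε := fun C hC => mul_le_mul_of_nonneg_left ρε.le hC
  have f3 := (lt C2 C20.le).trans_lt e3
  have f4 := (lt (K + 1) (by positivity)).trans_lt e4
  have f5 := (lt (K + 1 + C2) (by positivity)).trans_lt e5
  have f6 := (lt ((K + 1 + 4 * C2) * C2) (by positivity)).trans_lt e6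
  have ρK : 0 < ρ * K := mul_pos ρ0 hK
  have g1 : |ρ * K * l2| ≤ ρ * K := by
    rw [abs_mul, abs_of_pos ρK]; exact mul_le_of_le_one_right ρK.le bl2
  have g2 : |ρ * K * l1| ≤ ρ * K := by
    rw [abs_mul, abs_of_pos ρK]; exact mul_le_of_le_one_right ρK.le bl1
  rw [abs_le] at b1 b2 b3 g1 g2
  have B1 : |Y1 - l1| ≤ (K + 1) * ρ := by rw [abs_le]; constructor <;> linarith
  have B2 : |Y2 - l2| ≤ (K + 1) * ρ := by rw [abs_le]; constructor <;> linarith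
  rw [abs_le] at B1
  have gain : ρ * (K * m / 2) ≤ Y1 - l1 := by
    have t1 : ρ * K * m ≤ ρ * K * (-l2) := mul_le_mul_of_nonneg_left (by linarith) ρK.le
    have t2 : ε * ρ ≤ (K * m / 2) * ρ := mul_le_mul_of_nonneg_right (by linarith) ρ0.le
    linarith
  -- rotated trajectory
  have hn := rot_Tr hcs sp (a := -δ') (b := δ') (by linarith)
  set xn := fun t => RX c s Y1 Y2 Y3 t with hxn
  set yn := fun t => RY c s Y1 Y2 Y3 t with hyn
  set zn := fun t => RZ c s Y1 Y2 Y3 t with hzn'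
  have xn0 : xn 0 = Y1 := RX_zero hcs _ _ _
  have yn0 : yn 0 = Y2 := RY_zero _ _ _
  have mz' : (0:ℝ) ∈ Set.Icc (-δ') δ' := ⟨by linarith, d0.le⟩
  set τ := C2 * ρ with hτ
  have τ0 : 0 < τ := mul_pos C20 ρ0
  have mτ : τ ∈ Set.Icc (-η) η := ⟨by linarith, by linarith⟩
  have mτ' : -τ ∈ Set.Icc (-η) η := ⟨by linarith, by linarith⟩
  have sτ : s * (c * m * τ) = (K + 3) * ρ := by rw [hτ]; linear_combination ρ * sC2
  have hYb : |s * (Y1 - l1) + c * Y3| ≤ (K + 3) * ρ := by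
    rw [abs_le]
    have q1 : |s * (Y1 - l1)| ≤ (K + 1) * ρ := by
      rw [abs_mul, abs_of_pos hs]
      have := mul_le_mul s1.le (abs_le.2 B1) (abs_nonneg _) zero_le_one
      linarith
    have q2 : |c * Y3| ≤ 2 * ρ := by
      rw [abs_mul, abs_of_pos hc]
      have := mul_le_mul c1.le (abs_le.2 b3) (abs_nonneg _) zero_le_one
      linarith
    rw [abs_le] at q1 q2
    constructor <;> linarith
  rw [abs_le] at hYb
  have hcont : ContinuousOn (fun t => s * x t + c * z t) (Set.Icc (-τ) τ) := by
    have h1 := h.ex.1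
    have h2 := h.ez.1
    have : ContinuousOn (fun t => s * x t + c * z t) (Set.Icc (-η) η) := by fun_prop
    exact this.mono (Set.Icc_subset_Icc mτ'.1 mτ.2)
  obtain ⟨t', ht', hh⟩ : ∃ t' ∈ Set.Icc (-τ) τ, s * x t' + c * z t' = s * Y1 + c * Y3 := by
    refine intermediate_value_Icc (by linarith) hcont ⟨?_, ?_⟩
    · have q1 := h.x_incr hc mτ' mz (by linarith) hy
      have q2 := mul_le_mul_of_nonneg_left q1 hs.le
      have q3 := mul_nonpos_of_nonneg_of_nonpos hc.le (hzn (-τ) ⟨by linarith, by linarith⟩)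
      rw [hx] at q2
      linarith
    · have q1 := h.x_incr hc mz mτ (by linarith) hy
      have q2 := mul_le_mul_of_nonneg_left q1 hs.le
      have q3 := mul_nonneg hc.le (hzp τ ⟨by linarith, by linarith⟩)
      rw [hx] at q2
      linarith
  have mt' : t' ∈ Set.Icc (-η) η := ⟨by linarith [ht'.1], by linarith [ht'.2]⟩
  have mt'' : t' ∈ Set.Icc (-δ') δ' := ⟨by linarith [ht'.1], by linarith [ht'.2]⟩
  have abst : |t'| ≤ τ := abs_le.2 ht'
  have hD : |(xn t' - x t') - (Y1 - l1)| ≤ ((K + 1 + 4 * C2) * ρ) * τ := by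
    have E1 := h.ex.mono mτ'.1 (by linarith : -τ ≤ τ) mτ.2
    have E2 := hn.ex.mono (by linarith : -δ' ≤ -τ) (by linarith : -τ ≤ τ) (by linarith : τ ≤ δ')
    have E3 := E2.add E1.neg
    have q := E3.lip (C := (K + 1 + 4 * C2) * ρ) (fun r hr => ?_) (t := 0) (t' := t')
      ⟨by linarith, τ0.le⟩ ht'
    · rw [sub_zero] at q
      have q' : (K + 1 + 4 * C2) * ρ * |t'| ≤ (K + 1 + 4 * C2) * ρ * τ :=
        mul_le_mul_of_nonneg_left abst (by positivity)
      refine le_trans ?_ (q.trans q')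
      simp only [hx]
      rw [xn0]
      apply le_of_eq; congr 1
    · have mr : r ∈ Set.Icc (-η) η := ⟨by linarith [hr.1], by linarith [hr.2]⟩
      have mr' : r ∈ Set.Icc (-δ') δ' := ⟨by linarith [hr.1], by linarith [hr.2]⟩
      have q1 := h.y_lip hs hc hcs mz mr
      have q2 := hn.y_lip hs hc hcs mz' mr'
      rw [yn0] at q2
      rw [hyl] at q1
      have ar : |r| ≤ τ := abs_le.2 hr
      rw [sub_zero] at q1 q2
      have : |yn r - y r| ≤ (K + 1 + 4 * C2) * ρ := by
        have q3 : |yn r - y r| ≤ |yn r - Y2| + |Y2 - l2| + |y r - l2| := by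
          have w1 := abs_sub (yn r - Y2 + (Y2 - l2)) (y r - l2)
          have w2 := abs_add_le (yn r - Y2) (Y2 - l2)
          have w3 : yn r - Y2 + (Y2 - l2) - (y r - l2) = yn r - y r := by ring
          rw [w3] at w1; linarith
        linarith
      have e : -(c * yn r) + -(-(c * y r)) = -(c * (yn r - y r)) := by ring
      have q5 : c * |yn r - y r| ≤ 1 * |yn r - y r| :=
        mul_le_mul_of_nonneg_right c1.le (abs_nonneg _)
      show |-(c * yn r) + -(-(c * y r))| ≤ _
      rw [e, abs_neg, abs_mul, abs_of_pos hc]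
      linarith
  have hgt : x t' < xn t' := by
    have q : (K + 1 + 4 * C2) * ρ * τ = ((K + 1 + 4 * C2) * C2 * ρ) * ρ := by rw [hτ]; ring
    have q2 := mul_lt_mul_of_pos_right f6 ρ0
    rw [abs_le] at hD
    linarith [hD.1]
  have ynneg : ∀ r ∈ Set.Icc (-δ') δ', yn r ≤ -(m / 4) := by
    intro r hr
    have q2 := hn.y_lip hs hc hcs mz' hr
    rw [yn0, sub_zero] at q2
    have : |r| ≤ δ' := abs_le.2 hr
    rw [abs_le] at q2 B2
    linarith [q2.2, B2.2]
  have hlow : xn (-δ') ≤ x t' := by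
    have q := hn.x_incr hc (t := -δ') (t' := 0) ⟨le_rfl, by linarith⟩ mz' (by linarith) ynneg
    have q2 := h.x_lip hs hc hcs mz mt'
    rw [sub_zero, one_mul, abs_le, hx] at q2
    rw [xn0] at q
    linarith [q2.1]
  have xncont : ContinuousOn xn (Set.Icc (-δ') t') :=
    hn.ex.1.mono (Set.Icc_subset_Icc_right mt''.2)
  obtain ⟨tn, htn, hxe⟩ : ∃ tn ∈ Set.Icc (-δ') t', xn tn = x t' :=
    intermediate_value_Icc mt''.1 xncont ⟨hlow, hgt.le⟩
  have tnlt : tn < t' := by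
    refine lt_of_le_of_ne htn.2 fun e => ?_
    rw [e] at hxe; linarith
  have mtn : tn ∈ Set.Icc (-δ') δ' := ⟨htn.1, htn.2.trans mt''.2⟩
  have hze : zn tn = z t' := by
    have q := R_h hcs Y1 Y2 Y3 tn
    have q2 : s * xn tn + c * zn tn = s * x t' + c * z t' := by rw [hh]; exact q
    rw [hxe] at q2
    exact mul_left_cancel₀ hc.ne' (by linarith)
  have hye : yn tn = y t' := by
    have q1 := hn.sph tn mtn
    have q2 := h.sph t' mt'
    rw [hxe, hze] at q1
    have q3 : yn tn ^ 2 = y t' ^ 2 := by linarith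
    have q4 := ynneg tn mtn
    have q5 := hy t' mt'
    rcases sq_eq_sq_iff_eq_or_eq_neg.1 q3 with e | e
    · exact e
    · linarith
  have fin := hR tn (by linarith [htn.1])
  have := hopt t' mt' (T1 + tn) (by
    rw [← hxe, ← hye, ← hze]; exact fin)
  linarith
end


section
variable {c s a b : ℝ} {x y z u : ℝ → ℝ}

theorem lemII {η T1 θ : ℝ} (hcs : c ^ 2 + s ^ 2 = 1) (hs : 0 < s) (hc : 0 < c)
    (hP : Pert c s T1 (cos θ) (sin θ)) (hη : 0 < η) (hθ : sin θ < 0)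
    (h : Tr c s 0 η x y z u) (hx : x 0 = cos θ) (hy : y 0 = sin θ) (hz : z 0 = 0)
    (hzp : ∀ t ∈ Set.Icc 0 η, 0 ≤ z t)
    (hopt : ∀ t ∈ Set.Icc 0 η, ∀ T, Reach c s T 0 0 1 (x t) (y t) (z t) → T1 + t ≤ T) : False := by
  set η' := min η (-sin θ / 4) with hη'
  have d1 : η' ≤ η := min_le_left _ _
  have d2 : η' ≤ -sin θ / 4 := min_le_right _ _
  have d0 : 0 < η' := lt_min hη (by linarith)
  clear_value η'
  have r := run_Tr c s (θ - c * η') d0.le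
  have r2 := h.mono le_rfl d0.le d1
  have e0 : θ - c * η' + c * η' = θ := by ring
  have H := (r.concat r2 (by simp only [e0]; exact hx) (by simp only [e0]; exact hy) hz).shift η'
  rw [zero_sub, add_sub_cancel_right] at H
  set X := fun t => (fun t => if t ≤ η' then cos (θ - c * η' + c * t) else x (t - η')) (t + η') with hX
  set Y := fun t => (fun t => if t ≤ η' then sin (θ - c * η' + c * t) else y (t - η')) (t + η') with hY
  set Z := fun t => (fun t => if t ≤ η' then (0:ℝ) else z (t - η')) (t + η') with hZ
  have pos : ∀ t, 0 ≤ t → X t = x t ∧ Y t = y t ∧ Z t = z t := by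
    intro t ht
    rcases ht.eq_or_lt with e | e
    · subst e; simp [hX, hY, hZ, hx, hy, hz]
    · have : ¬ (t + η' ≤ η') := by linarith
      simp [hX, hY, hZ, e]
  have neg : ∀ t, t ≤ 0 → Z t = 0 := by
    intro t ht
    have : t + η' ≤ η' := by linarith
    simp [hZ, ht]
  obtain ⟨X0, Y0, Z0⟩ := pos 0 le_rfl
  have mz : (0:ℝ) ∈ Set.Icc (-η') η' := ⟨by linarith, d0.le⟩
  refine lemII' (η := η') (m := -sin θ / 2) hcs hs hc hP d0 (by linarith) H (X0.trans hx) (Y0.trans hy)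
    ?_ ?_ ?_ ?_
  · intro t ht
    have q := H.y_lip hs hc hcs mz ht
    have w : |t| ≤ η' := abs_le.2 ht
    rw [sub_zero, Y0, hy, abs_le] at q
    linarith [q.2]
  · intro t ht
    rw [(pos t ht.1).2.2]; exact hzp t ⟨ht.1, ht.2.trans d1⟩
  · intro t ht
    rw [neg t ht.2]
  · intro t ht T hT
    rcases le_total 0 t with e | e
    · obtain ⟨a1, a2, a3⟩ := pos t e
      rw [a1, a2, a3] at hT
      exact hopt t ⟨e, ht.2.trans d1⟩ T hT
    · have q := hT.trans (H.reach ht.1 e d0.le)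
      rw [X0, Y0, Z0] at q
      have := hopt 0 ⟨le_rfl, hη.le⟩ _ q
      linarith

theorem lemII_run {η T1 θ : ℝ} (hcs : c ^ 2 + s ^ 2 = 1) (hs : 0 < s) (hc : 0 < c)
    (hP : Pert c s T1 (cos θ) (sin θ)) (hη : 0 < η) (hθ : sin θ < 0)
    (hopt : ∀ t ∈ Set.Icc 0 η, ∀ T,
      Reach c s T 0 0 1 (cos (θ + c * t)) (sin (θ + c * t)) 0 → T1 + t ≤ T) : False :=
  lemII hcs hs hc hP hη hθ (run_Tr c s θ hη.le) (by simp) (by simp) rfl (fun _ _ => le_rfl) hopt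

lemma Tr.z_lip (hs : 0 < s) (hc : 0 < c) (hcs : c ^ 2 + s ^ 2 = 1) (h : Tr c s a b x y z u)
    {t t' : ℝ} (ht : t ∈ Set.Icc a b) (ht' : t' ∈ Set.Icc a b) : |z t' - z t| ≤ 1 * |t' - t| := by
  refine h.ez.lip (fun r hr => ?_) ht ht'
  rw [abs_mul, abs_mul, abs_of_pos hs]
  exact mul_le_one₀ (h.ub r hr) (by positivity)
      (mul_le_one₀ (cs_bounds hcs hs hc).1.le (abs_nonneg _) (h.bnd_y hr))

lemma mono_of_hd {a b : ℝ} {f f' : ℝ → ℝ} (hd : ∀ t, HasDerivAt f (f' t) t)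
    (hp : ∀ t ∈ Set.Icc a b, 0 ≤ f' t) : MonotoneOn f (Set.Icc a b) := by
  refine monotoneOn_of_deriv_nonneg (convex_Icc _ _) (fun t _ => (hd t).continuousAt.continuousWithinAt)
    (fun t _ => (hd t).differentiableAt.differentiableWithinAt) fun t ht => ?_
  rw [(hd t).deriv]; exact hp t (interior_subset ht)

set_option maxHeartbeats 1000000 in
theorem lemIII {η T1 : ℝ} (hcs : c ^ 2 + s ^ 2 = 1) (hs : 0 < s) (hc : 0 < c)
    (hP : Pert c s T1 1 0) (hη : 0 < η)
    (hopt : ∀ t ∈ Set.Icc 0 η, ∀ T,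
      Reach c s T 0 0 1 (cos (c * t)) (sin (c * t)) 0 → T1 + t ≤ T) : False := by
  obtain ⟨K, hK, δ, hδ, hP⟩ := hP
  obtain ⟨s1, c1⟩ := cs_bounds hcs hs hc
  have pi3 := pi_gt_three
  set φ := min (c * η) (π / 2) with hφ
  have φ0 : 0 < φ := lt_min (by positivity) (by positivity)
  have φ1 : φ ≤ c * η := min_le_left _ _
  have φ2 : φ ≤ π / 2 := min_le_right _ _
  clear_value φ
  have σ0 : 0 < sin φ := sin_pos_of_pos_of_lt_pi φ0 (by linarith)
  set δ1 := min (c / 16) (sin φ / 4) with hδ1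
  have d0 : 0 < δ1 := lt_min (by positivity) (by positivity)
  have d1 : δ1 ≤ c / 16 := min_le_left _ _
  have d2 : δ1 ≤ sin φ / 4 := min_le_right _ _
  clear_value δ1
  obtain ⟨ε, ⟨⟨⟨⟨⟨e1, e2⟩, e3⟩, e4⟩, e5⟩, e6⟩⟩ :=
    (((((ev_small 1 one_pos).and (ev_small 2 hK)).and (ev_small 12 hc)).and
      (ev_small 8 (by positivity : 0 < s * c * δ1 ^ 2))).and
      (ev_small (K + 1) (half_pos σ0))).and self_mem_nhdsWithin |>.exists
  have ε0 : 0 < ε := e6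
  obtain ⟨ρ, ρ0, ρε, Y1, Y2, Y3, sp, b1, b2, b3, hR⟩ := hP ε ε0
  have r0 := hR 0 (by linarith)
  rw [RX_zero hcs, RY_zero, RZ_zero hcs, add_zero] at r0
  clear hR hP
  have er : ε * ρ ≤ 1 * ρ := mul_le_mul_of_nonneg_right (by linarith) ρ0.le
  have er2 : ε * ρ ≤ K / 2 * ρ := mul_le_mul_of_nonneg_right (by linarith) ρ0.le
  have er3 : (K + 1) * ρ ≤ (K + 1) * ε := mul_le_mul_of_nonneg_left ρε.le (by positivity)
  have Kρ : 0 < K * ρ := mul_pos hK ρ0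
  rw [abs_le] at b1 b2
  have Y1lo : 1 - ρ ≤ Y1 := by linarith
  have Y2lo : 0 < Y2 := by linarith
  have Y2hi : Y2 ≤ (K + 1) * ρ := by linarith
  set w := |Y3| with hw
  have w0 : 0 ≤ w := abs_nonneg _
  have wsq : w ^ 2 = Y3 ^ 2 := sq_abs _
  have spw : Y1 ^ 2 + Y2 ^ 2 + (-w) ^ 2 = 1 := by rw [neg_sq, wsq, sp]
  have hn := rot_Tr hcs spw (a := 0) (b := δ1) d0.le
  set xn := fun t => RX c s Y1 Y2 (-w) t with hxn
  set yn := fun t => RY c s Y1 Y2 (-w) t with hyn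
  set zn := fun t => RZ c s Y1 Y2 (-w) t with hzn
  have dx : ∀ t, HasDerivAt xn (-(c * yn t)) t := RX_deriv Y1 Y2 (-w)
  have dy : ∀ t, HasDerivAt yn (c * xn t - s * zn t) t := RY_deriv hcs Y1 Y2 (-w)
  have dz : ∀ t, HasDerivAt zn (s * yn t) t := RZ_deriv Y1 Y2 (-w)
  have xn0 : xn 0 = Y1 := RX_zero hcs _ _ _
  have yn0 : yn 0 = Y2 := RY_zero _ _ _
  have zn0 : zn 0 = -w := RZ_zero hcs _ _ _
  have m0 : (0:ℝ) ∈ Set.Icc 0 δ1 := ⟨le_rfl, d0.le⟩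
  have xlo : ∀ t ∈ Set.Icc 0 δ1, 1 - ρ - δ1 ≤ xn t := by
    intro t ht
    have q := hn.x_lip hs hc hcs m0 ht
    rw [xn0, sub_zero, one_mul, abs_of_nonneg ht.1, abs_le] at q
    linarith [q.1, ht.2]
  have zhi : ∀ t ∈ Set.Icc 0 δ1, zn t ≤ 2 * ρ + δ1 := by
    intro t ht
    have q := hn.z_lip hs hc hcs m0 ht
    rw [zn0, sub_zero, one_mul, abs_of_nonneg ht.1, abs_le] at q
    linarith [q.2, ht.2]
  have ymono : MonotoneOn (fun t => yn t - c / 2 * t) (Set.Icc 0 δ1) := by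
    refine mono_of_hd (fun t => (dy t).sub ((hasDerivAt_id t).const_mul (c / 2))) fun t ht => ?_
    have q1 := xlo t ht
    have q2 := zhi t ht
    have q3 := mul_le_mul_of_nonneg_left q1 hc.le
    have q4 := mul_le_mul_of_nonneg_left q2 hs.le
    have q5 : c * (ρ + δ1) ≤ 1 * (ρ + δ1) := mul_le_mul_of_nonneg_right c1.le (by positivity)
    have q6 : s * (2 * ρ + δ1) ≤ 1 * (2 * ρ + δ1) := mul_le_mul_of_nonneg_right s1.le (by positivity)
    simp only [mul_one]
    linarith
  have ylo : ∀ t ∈ Set.Icc 0 δ1, Y2 + c / 2 * t ≤ yn t := by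
    intro t ht
    have q := ymono m0 ht ht.1
    simp only [yn0] at q
    linarith
  have zmono : MonotoneOn (fun t => zn t - s * c / 4 * t ^ 2) (Set.Icc 0 δ1) := by
    refine mono_of_hd (fun t => (dz t).sub ((hasDerivAt_pow 2 t).const_mul (s * c / 4))) fun t ht => ?_
    have q1 := mul_le_mul_of_nonneg_left (ylo t ht) hs.le
    have q2 := mul_pos hs Y2lo
    simp only [Nat.cast_ofNat, Nat.add_one_sub_one, pow_one]
    linarith
  have zmono' : MonotoneOn zn (Set.Icc 0 δ1) := by
    refine mono_of_hd dz fun t ht => mul_nonneg hs.le ?_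
    have := ylo t ht
    have : 0 ≤ c / 2 * t := mul_nonneg (by positivity) ht.1
    linarith
  have zend : 0 ≤ zn δ1 := by
    have q := zmono m0 (⟨d0.le, le_rfl⟩ : δ1 ∈ Set.Icc 0 δ1) d0.le
    simp only [zn0] at q
    linarith
  obtain ⟨tL, htL, hzL⟩ : ∃ t ∈ Set.Icc 0 δ1, zn t = 0 :=
    intermediate_value_Icc d0.le hn.ez.1 ⟨by simp only [zn0]; linarith, zend⟩
  have kmono : MonotoneOn (fun t => cos (c * t) * yn t - sin (c * t) * xn t) (Set.Icc 0 tL) := by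
    refine mono_of_hd (f' := fun t => cos (c * t) * (s * (- zn t))) (fun t => ?_) fun t ht => ?_
    · have k1 := (((hasDerivAt_id t).const_mul c).cos.mul (dy t)).sub
        (((hasDerivAt_id t).const_mul c).sin.mul (dx t))
      refine k1.congr_deriv ?_
      simp only [id]; ring
    · have q1 : zn t ≤ zn tL := zmono' ⟨ht.1, ht.2.trans htL.2⟩ htL ht.2
      have q2 : 0 ≤ c * t := mul_nonneg hc.le ht.1
      have q3 : c * t ≤ 1 * t := mul_le_mul_of_nonneg_right c1.le ht.1
      refine mul_nonneg (cos_nonneg_of_neg_pi_div_two_le_of_le ?_ ?_) (mul_nonneg hs.le (by linarith))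
      · linarith
      · linarith [ht.2, htL.2]
  have kk := kmono (⟨le_rfl, htL.1⟩ : (0:ℝ) ∈ Set.Icc 0 tL) ⟨htL.1, le_rfl⟩ htL.1
  simp only [mul_zero, cos_zero, sin_zero, yn0, one_mul, zero_mul, sub_zero] at kk
  have spL := hn.sph tL htL
  rw [hzL] at spL
  set M1 := xn tL with hM1
  set M2 := yn tL with hM2
  have M1pos : 0 < M1 := by have := xlo tL htL; linarith
  have M2hi : M2 ≤ sin φ := by
    have q := hn.y_lip hs hc hcs m0 htL
    rw [yn0, sub_zero, abs_of_nonneg htL.1, abs_le] at q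
    linarith [q.2, htL.2]
  have M2lo : 0 < M2 := by
    have := ylo tL htL
    have : 0 ≤ c / 2 * tL := mul_nonneg (by positivity) htL.1
    linarith
  have M2b : -1 ≤ M2 ∧ M2 ≤ 1 :=
    abs_le.1 ((sq_le_one_iff_abs_le_one _).1 (by linarith [sq_nonneg M1]))
  set θ := arcsin M2 with hθ
  have sinθ : sin θ = M2 := sin_arcsin M2b.1 M2b.2
  have cosθ : cos θ = M1 := by
    rw [hθ, cos_arcsin, show 1 - M2 ^ 2 = M1 ^ 2 by linarith, sqrt_sq M1pos.le]
  have θ0 : 0 ≤ θ := arcsin_nonneg.2 M2lo.le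
  have θφ : θ ≤ φ := by
    have := monotone_arcsin M2hi
    rwa [arcsin_sin (by linarith) φ2] at this
  have hgt : c * tL < θ := by
    by_contra hcon
    push Not at hcon
    have q3 : c * tL ≤ 1 * tL := mul_le_mul_of_nonneg_right c1.le htL.1
    have : sin (θ - c * tL) ≤ 0 :=
      sin_nonpos_of_nonpos_of_neg_pi_le (by linarith) (by linarith [htL.2])
    rw [sin_sub, sinθ, cosθ] at this
    linarith
  have tail : Reach c s tL Y1 Y2 Y3 M1 M2 0 := by
    have q := rot_Reach hcs spw htL.1
    have hzL' : RZ c s Y1 Y2 (-w) tL = 0 := hzL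
    rw [hzL'] at q
    rcases le_total 0 Y3 with e | e
    · rw [hw, abs_of_nonneg e] at q
      have := q.refl
      rw [neg_neg, neg_zero] at this
      simp only [hM1, hM2, hxn, hyn, hw, abs_of_nonneg e]
      exact this
    · rw [hw, abs_of_nonpos e, neg_neg] at q
      simp only [hM1, hM2, hxn, hyn, hw, abs_of_nonpos e, neg_neg]
      exact q
  have fin := r0.trans tail
  have hθc : c * (θ / c) = θ := by field_simp
  have := hopt (θ / c) ⟨by positivity, by rw [div_le_iff₀ hc]; linarith⟩ (T1 + tL) (by
    rw [hθc, cosθ, sinθ]; exact fin)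
  have h2 : tL < θ / c := by rw [lt_div_iff₀ hc]; linarith
  linarith
end


section
variable {c s a b : ℝ} {x y z u : ℝ → ℝ}

lemma first_zero {p q : ℝ} {f : ℝ → ℝ} (hpq : p ≤ q) (hf : ContinuousOn f (Set.Icc p q))
    (hp : 0 < f p) (hq : f q ≤ 0) :
    ∃ r, p < r ∧ r ≤ q ∧ f r = 0 ∧ ∀ t, p ≤ t → t < r → 0 < f t := by
  have hcl : IsCompact (Set.Icc p q ∩ f ⁻¹' Set.Iic 0) :=
    isCompact_Icc.of_isClosed_subset (hf.preimage_isClosed_of_isClosed isClosed_Icc isClosed_Iic)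
      Set.inter_subset_left
  obtain ⟨r, ⟨hr, hfr⟩, hl⟩ := hcl.exists_isLeast ⟨q, ⟨hpq, le_rfl⟩, hq⟩
  have hfr' : f r ≤ 0 := hfr
  have hpr : p < r := lt_of_le_of_ne hr.1 (by rintro rfl; linarith)
  have hpos : ∀ t, p ≤ t → t < r → 0 < f t := by
    intro t h1 h2
    by_contra hcon
    have := hl ⟨⟨h1, h2.le.trans hr.2⟩, not_lt.1 hcon⟩
    linarith
  refine ⟨r, hpr, hr.2, ?_, hpos⟩
  obtain ⟨t, ht, ht0⟩ := intermediate_value_Icc' hr.1 (hf.mono (Set.Icc_subset_Icc le_rfl hr.2))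
    (show (0:ℝ) ∈ Set.Icc (f r) (f p) from ⟨hfr', hp.le⟩)
  rcases ht.2.lt_or_eq with h | h
  · have := hpos t ht.1 h; linarith
  · rw [← h]; exact ht0

lemma last_zero {p q : ℝ} {f : ℝ → ℝ} (hpq : p ≤ q) (hf : ContinuousOn f (Set.Icc p q))
    (hp : 0 ≤ f p) (hq : f q < 0) :
    ∃ r, p ≤ r ∧ r < q ∧ f r = 0 ∧ ∀ t, r < t → t ≤ q → f t < 0 := by
  obtain ⟨r, h1, h2, h3, h4⟩ := first_zero (f := fun t => - f (p + q - t)) hpq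
    ((hf.comp (f := fun t => p + q - t) (by fun_prop)
      (fun t ht => ⟨by linarith [ht.2], by linarith [ht.1]⟩)).neg)
    (by simpa using hq) (by simpa using hp)
  refine ⟨p + q - r, by linarith, by linarith, by simpa using h3, fun t h5 h6 => ?_⟩
  have := h4 (p + q - t) (by linarith) (by linarith)
  simpa using this

lemma sign_const {p q : ℝ} {f : ℝ → ℝ} (hf : ContinuousOn f (Set.Icc p q))
    (hq : 0 < f q) (hne : ∀ t, p < t → t ≤ q → f t ≠ 0) : ∀ t, p < t → t ≤ q → 0 < f t := by
  intro t h1 h2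
  by_contra hcon
  obtain ⟨r, hr, hr0⟩ := intermediate_value_Icc h2 (hf.mono (Set.Icc_subset_Icc h1.le le_rfl))
    (show (0:ℝ) ∈ Set.Icc (f t) (f q) from ⟨not_lt.1 hcon, hq.le⟩)
  exact hne r (by linarith [hr.1]) hr.2 hr0

lemma near_one (hcs : c ^ 2 + s ^ 2 = 1) (hs : 0 < s) (hsc : s < c) (h : Tr c s a b x y z u)
    {r t t' : ℝ} (hr : r ∈ Set.Icc a b) (hx : x r = 1) (hz : z r = 0) (hat : a ≤ t) (htt : t < t')
    (htb : t' ≤ b) (h1 : r - 1/4 ≤ t) (h2 : t' ≤ r + 1/4) : y t < y t' := by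
  have hc : 0 < c := hs.trans hsc
  have mt : t ∈ Set.Icc a b := ⟨hat, by linarith⟩
  have mt' : t' ∈ Set.Icc a b := ⟨by linarith, htb⟩
  have key : ∫ ρ in t..t', c / 2 ≤ ∫ ρ in t..t', (c * x ρ - u ρ * (s * z ρ)) := by
    refine intervalIntegral.integral_mono_on htt.le (by simp) (h.ey.intg mt mt') fun ρ hρ => ?_
    have mρ : ρ ∈ Set.Icc a b := ⟨by linarith [hρ.1], by linarith [hρ.2]⟩
    have habs : |ρ - r| ≤ 1 / 4 := abs_le.2 ⟨by linarith [hρ.1], by linarith [hρ.2]⟩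
    have q1 := h.x_lip hs hc hcs hr mρ
    have q2 := h.z_lip hs hc hcs hr mρ
    rw [hx] at q1
    rw [hz, sub_zero] at q2
    have q3 : 3 / 4 ≤ x ρ := by linarith [(abs_le.1 q1).1]
    have q4 : |z ρ| ≤ 1 / 4 := by linarith
    have q5 : |u ρ * (s * z ρ)| ≤ c / 4 := by
      rw [abs_mul, abs_mul, abs_of_pos hs]
      have := mul_le_mul (h.ub ρ mρ) (mul_le_mul hsc.le q4 (abs_nonneg _) hc.le)
        (mul_nonneg hs.le (abs_nonneg _)) zero_le_one
      linarith
    have q6 : c * (3 / 4) ≤ c * x ρ := mul_le_mul_of_nonneg_left q3 hc.le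
    linarith [(abs_le.1 q5).2]
  rw [← h.ey.diff mt mt'] at key
  simp only [intervalIntegral.integral_const, smul_eq_mul] at key
  have : 0 < (t' - t) * (c / 2) := mul_pos (by linarith) (by linarith)
  linarith

lemma run_cross {t0 t1 : ℝ} (hc : 0 < c) (h : Tr c s t0 t1 x y z u) (hlt : t0 < t1)
    (hy : ∀ t ∈ Set.Ioo t0 t1, y t < 0) (hz0 : z t0 = 0) (hz1 : z t1 = 0) :
    ∃ θ T, 0 < T ∧ T ≤ t1 - t0 ∧ cos θ = x t0 ∧ sin θ = y t0 ∧ cos (θ + c * T) = x t1 ∧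
      sin (θ + c * T) = y t1 := by
  have m0 : t0 ∈ Set.Icc t0 t1 := ⟨le_rfl, hlt.le⟩
  have m1 : t1 ∈ Set.Icc t0 t1 := ⟨hlt.le, le_rfl⟩
  have hy' := nonpos_of_Ioo hlt h.ey.1 (fun t ht => (hy t ht).le)
  have s0 := h.sph t0 m0
  have s1 := h.sph t1 m1
  rw [hz0] at s0
  rw [hz1] at s1
  have hxm := h.x_strictMono hc hy m0 m1 hlt
  have b0 := abs_le.1 (h.bx m0)
  have b1 := abs_le.1 (h.bx m1)
  have cl := CL (m := 0) (R := 1) hlt.le hc one_pos h.ex.1 (fun t ht => h.x_deriv ht)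
    (fun t ht => by
      have := mul_neg_of_pos_of_neg hc (hy t ht)
      linarith)
    (fun t ht => by
      have := h.sph t ⟨ht.1.le, ht.2.le⟩
      have e : (1:ℝ) ^ 2 - (x t - 0) ^ 2 = y t ^ 2 + z t ^ 2 := by linarith
      rw [e]
      have : 0 ≤ c ^ 2 * z t ^ 2 := by positivity
      linarith)
  simp only [sub_zero, div_one] at cl
  have ha : arccos (x t1) < arccos (x t0) := arccos_lt_arccos b0.1 hxm b1.2
  have e1 : -arccos (x t0) + c * ((arccos (x t0) - arccos (x t1)) / c) = -arccos (x t1) := by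
    field_simp; ring
  refine ⟨-arccos (x t0), (arccos (x t0) - arccos (x t1)) / c, div_pos (by linarith) hc,
    by rw [div_le_iff₀ hc]; linarith, ?_, ?_, ?_, ?_⟩
  · rw [cos_neg, cos_arccos b0.1 b0.2]
  · exact sin_neg_arccos' (by linarith) (hy' t0 m0)
  · rw [e1, cos_neg, cos_arccos b1.1 b1.2]
  · rw [e1]; exact sin_neg_arccos' (by linarith) (hy' t1 m1)

lemma side {t2 T1 θ : ℝ} (hcs : c ^ 2 + s ^ 2 = 1) (hs : 0 < s) (hc : 0 < c)
    (hP : Pert c s T1 (cos θ) (sin θ)) (hθ : sin θ < 0)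
    (h : Tr c s 0 t2 x y z u) (ht2 : 0 < t2) (hx : x 0 = cos θ) (hy : y 0 = sin θ) (hz : z 0 = 0)
    (hopt : ∀ t ∈ Set.Icc 0 t2, ∀ T, Reach c s T 0 0 1 (x t) (y t) (z t) → T1 + t ≤ T)
    (hopt' : ∀ t ∈ Set.Icc 0 t2, ∀ T, Reach c s T 0 0 1 (x t) (y t) (-z t) → T1 + t ≤ T) :
    False := by
  have m0 : (0:ℝ) ∈ Set.Icc 0 t2 := ⟨le_rfl, ht2.le⟩
  obtain ⟨η, hη, hη2, hηs⟩ : ∃ η, 0 < η ∧ η ≤ t2 ∧ 4 * η ≤ - sin θ :=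
    ⟨min t2 (-sin θ / 4), lt_min ht2 (by linarith), min_le_left _ _, by
      have := min_le_right t2 (-sin θ / 4); linarith⟩
  have yneg : ∀ t ∈ Set.Icc 0 η, y t < 0 := by
    intro t ht
    have q := h.y_lip hs hc hcs m0 ⟨ht.1, ht.2.trans hη2⟩
    rw [hy, sub_zero, abs_of_nonneg ht.1] at q
    linarith [(abs_le.1 q).2, ht.2]
  have hη' := h.mono le_rfl hη.le hη2
  by_cases hex : ∃ t3, 0 < t3 ∧ t3 ≤ η ∧ z t3 = 0
  · obtain ⟨t3, h3, h3', hz3⟩ := hex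
    obtain ⟨θ', T, hT, hT', e1, e2, e3, e4⟩ := run_cross hc (hη'.mono le_rfl h3.le h3') h3
      (fun t ht => yneg t ⟨ht.1.le, ht.2.le.trans h3'⟩) hz hz3
    rw [← hx, ← hy, ← e1, ← e2] at hP
    refine lemII_run hcs hs hc hP hT (by rw [e2, hy]; exact hθ) fun t ht T' hR => ?_
    have r2 := run_Reach (c := c) s (θ' + c * t) (T := T - t) (by linarith [ht.2])
    rw [show θ' + c * t + c * (T - t) = θ' + c * T by ring, e3, e4] at r2
    have := hR.trans r2
    rw [← hz3] at this
    have := hopt t3 ⟨h3.le, h3'.trans hη2⟩ _ (by simpa [hz3] using this)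
    linarith
  · push Not at hex
    rcases lt_or_gt_of_ne (hex η hη le_rfl) with hn | hp
    · have hs' := sign_const (f := fun t => - z t) hη'.ez.1.neg (by simpa using hn)
        (fun t h1 h2 => by simpa using hex t h1 h2)
      refine lemII hcs hs hc hP hη hθ hη'.refl hx hy (by simp [hz]) (fun t ht => ?_)
        (fun t ht T hR => hopt' t ⟨ht.1, ht.2.trans hη2⟩ T hR)
      rcases ht.1.lt_or_eq with e | e
      · exact (hs' t e ht.2).le
      · rw [← e, hz]; simp
    · have hs' := sign_const hη'.ez.1 hp hex
      refine lemII hcs hs hc hP hη hθ hη' hx hy hz (fun t ht => ?_)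
        (fun t ht T hR => hopt t ⟨ht.1, ht.2.trans hη2⟩ T hR)
      rcases ht.1.lt_or_eq with e | e
      · exact (hs' t e ht.2).le
      · rw [← e, hz]

lemma B_eq (hcs : c ^ 2 + s ^ 2 = 1) (hs : 0 < s) (hc : 0 < c) {x y z : ℝ}
    (hsph : x ^ 2 + y ^ 2 + z ^ 2 = 1) (hy : y = 0) (hz : 0 < z) (hh : s * x + c * z = s) :
    x = s ^ 2 - c ^ 2 ∧ z = 2 * s * c := by
  subst hy
  have e : c * z = s * (1 - x) := by linarith
  have h1 : 0 < 1 - x := by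
    have : 0 < s * (1 - x) := by rw [← e]; positivity
    exact (mul_pos_iff_of_pos_left hs).1 this
  have e2 : (1 - x) * (x - (s ^ 2 - c ^ 2)) = 0 := by
    have e3 : (c * z) ^ 2 = (s * (1 - x)) ^ 2 := by rw [e]
    linear_combination e3 - c ^ 2 * hsph - (x - x ^ 2) * hcs
  have hx : x = s ^ 2 - c ^ 2 := by
    rcases mul_eq_zero.1 e2 with q | q <;> linarith
  refine ⟨hx, ?_⟩
  have : c * (z - 2 * s * c) = 0 := by
    rw [hx] at e
    linear_combination e - s * hcs
  rcases mul_eq_zero.1 this with q | q <;> linarith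

lemma pole' {τ T1 TB : ℝ} (hcs : c ^ 2 + s ^ 2 = 1) (hs : 0 < s) (hc : 0 < c)
    (hP : Pert c s T1 1 0) (h : Tr c s 0 τ x y z u) (hτ : 0 < τ)
    (hx : x 0 = 1) (hy : y 0 = 0) (hz : z 0 = 0) (hyp : ∀ t ∈ Set.Ioo 0 τ, 0 < y t)
    (hyτ : y τ = 0) (hzτ : 0 < z τ)
    (hB : Reach c s TB 0 0 1 (s ^ 2 - c ^ 2) 0 (2 * s * c)) (hTB : TB < T1)
    (hopt : ∀ T, Reach c s T 0 0 1 (x τ) (y τ) (z τ) → T1 + τ ≤ T) : False := by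
  have hsph := h.sph τ ⟨hτ.le, le_rfl⟩
  obtain ⟨tL, htL, tR, htR, hle, θ, hθ1, hθ2, f1, f2, f3, -, f4, f5⟩ := sheet hcs hs hc h.rev hτ
    (fun t ht => by
      have := hyp (τ - t) ⟨by linarith [ht.2], by linarith [ht.1]⟩
      linarith) (by simpa using hz) (by simpa using hzτ)
  simp only [sub_zero, sub_self, hx, hy, neg_zero] at f1 f2 f3 f4 f5 hle
  have h0 : θ + c * tR = 0 := by
    have q : 0 ≤ c * tR := mul_nonneg hc.le htR
    rcases hθ2.lt_or_eq with e | e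
    · have := sin_neg_of_neg_of_neg_pi_lt e (by linarith)
      linarith
    · exact e
  rcases htR.lt_or_eq with hpos | hzero
  · have hθ : θ = -(c * tR) := by linarith
    refine lemIII hcs hs hc hP hpos fun t ht T hR => ?_
    have r2 := run_Reach (c := c) s (c * t) (T := tR - t) (by linarith [ht.2])
    rw [show c * t + c * (tR - t) = c * tR by ring] at r2
    have r3 := (rot_Reach hcs (x := x τ) (y := - y τ) (z := z τ) (by simpa using hsph) htL.le).rev
    rw [f1, f2, f3, hθ, cos_neg, sin_neg, neg_neg, neg_neg] at r3
    have := hopt _ ((hR.trans r2).trans r3)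
    linarith
  · subst hzero
    simp only [mul_zero, add_zero] at h0 f4 f5
    have rh := R_h hcs (x τ) (- y τ) (z τ) tL
    rw [f1, f3, f4] at rh
    obtain ⟨e1, e2⟩ := B_eq hcs hs hc hsph hyτ hzτ (by linarith)
    have := hopt TB (by rw [e1, e2, hyτ]; exact hB)
    linarith

lemma pole {t2 T1 TB : ℝ} (hcs : c ^ 2 + s ^ 2 = 1) (hs : 0 < s) (hsc : s < c)
    (hP : Pert c s T1 1 0) (h : Tr c s 0 t2 x y z u) (ht2 : 0 < t2)
    (hx : x 0 = 1) (hy : y 0 = 0) (hz : z 0 = 0) (hz2 : z t2 = 0)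
    (hB : Reach c s TB 0 0 1 (s ^ 2 - c ^ 2) 0 (2 * s * c)) (hTB : TB < T1)
    (hopt : ∀ t ∈ Set.Icc 0 t2, ∀ T, Reach c s T 0 0 1 (x t) (y t) (z t) → T1 + t ≤ T)
    (hopt' : ∀ t ∈ Set.Icc 0 t2, ∀ T, Reach c s T 0 0 1 (x t) (y t) (-z t) → T1 + t ≤ T) :
    False := by
  have hc : 0 < c := hs.trans hsc
  have m0 : (0:ℝ) ∈ Set.Icc 0 t2 := ⟨le_rfl, ht2.le⟩
  have noex : ∀ t3, 0 < t3 → t3 ≤ t2 → (∀ t ∈ Set.Ioo 0 t3, 0 < y t) → z t3 ≠ 0 := by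
    intro t3 h3 h3' hyp hz3
    obtain ⟨θ, T, hT, hT', e1, e2, e3, e4⟩ := run_cross hc (h.mono le_rfl h3.le h3').half h3
      (fun t ht => by have := hyp t ht; linarith) hz hz3
    simp only [hx, hy, neg_zero] at e1 e2 e3 e4
    rw [cos_add, e1, e2] at e3
    rw [sin_add, e1, e2] at e4
    refine lemIII hcs hs hc hP hT fun t ht T' hR => ?_
    have r2 := run_Reach (c := c) s (c * t) (T := T - t) (by linarith [ht.2])
    rw [show c * t + c * (T - t) = c * T by ring, show cos (c * T) = x t3 by linarith,
      show sin (c * T) = y t3 by linarith] at r2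
    have := hopt t3 ⟨h3.le, h3'⟩ _ (by rw [hz3]; exact hR.trans r2)
    linarith
  obtain ⟨ε, hε, hε2, hε4⟩ : ∃ ε, 0 < ε ∧ ε ≤ t2 ∧ ε ≤ 1 / 4 :=
    ⟨min t2 (1/4), lt_min ht2 (by norm_num), min_le_left _ _, min_le_right _ _⟩
  have ysm : ∀ t, 0 < t → t ≤ ε → 0 < y t := by
    intro t h1 h2
    have := near_one hcs hs hsc h m0 hx hz le_rfl h1 (h2.trans hε2) (by norm_num) (by linarith)
    rwa [hy] at this
  obtain ⟨q, hq, hqy⟩ : ∃ q ∈ Set.Ioo 0 t2, y q ≤ 0 := by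
    by_contra hcon
    push Not at hcon
    exact noex t2 ht2 le_rfl hcon hz2
  have hεq : ε < q := by
    by_contra hcon
    have := ysm q hq.1 (not_lt.1 hcon)
    linarith
  obtain ⟨τ, h1, h2, h3, h4⟩ := first_zero hεq.le
    (h.ey.1.mono (Set.Icc_subset_Icc hε.le hq.2.le)) (ysm ε hε le_rfl) hqy
  have hτ : 0 < τ := hε.trans h1
  have hτ2 : τ ≤ t2 := h2.trans hq.2.le
  have yp : ∀ t ∈ Set.Ioo 0 τ, 0 < y t := by
    intro t ht
    rcases le_total t ε with e | e
    · exact ysm t ht.1 e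
    · exact h4 t e ht.2
  rcases lt_or_gt_of_ne (noex τ hτ hτ2 yp) with hn | hp
  · exact pole' hcs hs hc hP (h.mono le_rfl hτ.le hτ2).refl hτ hx hy (by simp [hz]) yp h3
      (by linarith) hB hTB (hopt' τ ⟨hτ.le, hτ2⟩)
  · exact pole' hcs hs hc hP (h.mono le_rfl hτ.le hτ2) hτ hx hy hz yp h3
      hp hB hTB (hopt τ ⟨hτ.le, hτ2⟩)

theorem core1 {t1 t2 : ℝ} (hcs : c ^ 2 + s ^ 2 = 1) (hs : 0 < s) (hsc : s < c)
    (h : Tr c s a t2 x y z u) (hxa : x a = 0) (hya : y a = 0) (hza : z a = 1)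
    (ht1 : a < t1) (ht2 : t1 < t2) (hz1 : z t1 = 0) (hz2 : z t2 = 0)
    (hzp : ∀ t, a ≤ t → t < t1 → 0 < z t)
    (hcase : y t1 < 0 ∨ (x t1 = 1 ∧ y t1 = 0))
    (hopt : ∀ T, Reach c s T 0 0 1 (x t2) (y t2) (z t2) → t2 - a ≤ T) : False := by
  have hc : 0 < c := hs.trans hsc
  have opt : ∀ t, a ≤ t → t ≤ t2 → ∀ T, Reach c s T 0 0 1 (x t) (y t) (z t) → t - a ≤ T := by
    intro t h1 h2 T hR
    have := hopt _ (hR.trans (h.reach h1 h2 le_rfl))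
    linarith
  have opt' : ∀ t, a ≤ t → t ≤ t2 → ∀ T, Reach c s T 0 0 1 (x t) (y t) (-z t) → t - a ≤ T := by
    intro t h1 h2 T hR
    have q := (h.reach h1 h2 le_rfl).refl
    rw [hz2, neg_zero] at q
    have := hopt _ (by rw [hz2]; exact hR.trans q)
    linarith
  have m1 : t1 ∈ Set.Icc a t2 := ⟨ht1.le, ht2.le⟩
  obtain ⟨tB, hB1, hB2, hB3, hB4⟩ : ∃ r, a ≤ r ∧ r < t1 ∧ y r = 0 ∧ ∀ t, r < t → t < t1 → y t < 0 := by
    rcases hcase with hneg | ⟨hx1, hy1⟩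
    · obtain ⟨r, q1, q2, q3, q4⟩ := last_zero ht1.le
        (h.ey.1.mono (Set.Icc_subset_Icc le_rfl ht2.le)) hya.ge hneg
      exact ⟨r, q1, q2, q3, fun t e e' => q4 t e e'.le⟩
    · obtain ⟨p, hp1, hp2, hp3⟩ : ∃ p, a ≤ p ∧ p < t1 ∧ t1 - 1 / 4 ≤ p :=
        ⟨max a (t1 - 1 / 4), le_max_left _ _, max_lt ht1 (by linarith), le_max_right _ _⟩
      have ysm : ∀ t, p ≤ t → t < t1 → y t < 0 := by
        intro t e1 e2
        have := near_one hcs hs hsc h m1 hx1 hz1 (hp1.trans e1) e2 ht2.le (by linarith) (by linarith)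
        linarith
      obtain ⟨r, q1, q2, q3, q4⟩ := last_zero hp1
        (h.ey.1.mono (Set.Icc_subset_Icc le_rfl (hp2.le.trans ht2.le))) hya.ge (ysm p le_rfl hp2)
      refine ⟨r, q1, q2.trans hp2, q3, fun t e e' => ?_⟩
      rcases le_total t p with w | w
      · exact q4 t e w
      · exact ysm t w e'
  have hzB := hzp tB hB1 hB2
  have sphB := h.sph tB ⟨hB1, by linarith⟩
  obtain ⟨tL, htL, tR, htR, hle, θ, hθ1, hθ2, f1, f2, f3, f3', f4, f5⟩ := sheet hcs hs hc
    (h.mono hB1 hB2.le ht2.le) hB2 (fun t ht => hB4 t ht.1 ht.2) hz1 hzB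
  have rB : Reach c s (tB - a) 0 0 1 (x tB) (y tB) (z tB) := by
    have := h.reach le_rfl hB1 (by linarith : tB ≤ t2)
    rwa [hxa, hya, hza] at this
  have rL := rB.trans (rot_Reach hcs sphB htL.le)
  rw [f1, f2, f3] at rL
  have heq : tL + tR = t1 - tB := by
    have r2 := run_Reach (c := c) s θ htR
    rw [f4, f5] at r2
    have := opt t1 ht1.le ht2.le _ (by rw [hz1]; exact rL.trans r2)
    linarith
  have hP := pert_core hcs hs hsc (h.mono le_rfl hB1 (by linarith : tB ≤ t2)) hxa hya hza htL f1 f2 f3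
    (fun t ht => hzp t ht.1 (ht.2.trans_lt hB2)) f3'
  rcases htR.lt_or_eq with hpos | hzero
  · have : 0 < c * tR := mul_pos hc hpos
    refine lemII_run hcs hs hc hP hpos (sin_neg_of_neg_of_neg_pi_lt (by linarith) hθ1)
      fun t ht T hR => ?_
    have r2 := run_Reach (c := c) s (θ + c * t) (T := tR - t) (by linarith [ht.2])
    rw [show θ + c * t + c * (tR - t) = θ + c * tR by ring, f4, f5] at r2
    have := opt t1 ht1.le ht2.le _ (by rw [hz1]; exact hR.trans r2)
    linarith
  · subst hzero
    simp only [mul_zero, add_zero] at f4 f5 heq hθ2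
    have hT1 : tB + tL - a = t1 - a := by linarith
    rw [hT1] at hP
    have hsh := (h.mono ht1.le ht2.le le_rfl).shift t1
    rw [sub_self] at hsh
    have o1 : ∀ t ∈ Set.Icc 0 (t2 - t1), ∀ T,
        Reach c s T 0 0 1 (x (t + t1)) (y (t + t1)) (z (t + t1)) → t1 - a + t ≤ T := by
      intro t ht T hR
      have := opt (t + t1) (by linarith [ht.1]) (by linarith [ht.2]) T hR
      linarith
    have o2 : ∀ t ∈ Set.Icc 0 (t2 - t1), ∀ T,
        Reach c s T 0 0 1 (x (t + t1)) (y (t + t1)) (-z (t + t1)) → t1 - a + t ≤ T := by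
      intro t ht T hR
      have := opt' (t + t1) (by linarith [ht.1]) (by linarith [ht.2]) T hR
      linarith
    rcases hcase with hneg | ⟨hx1, hy1⟩
    · exact side hcs hs hc hP (by linarith) hsh (by linarith) (by simp [f4]) (by simp [f5])
        (by simp [hz1]) o1 o2
    · rw [f4, f5, hx1, hy1] at hP
      have rh := R_h hcs (x tB) (y tB) (z tB) tL
      rw [f1, f3, f4, hx1] at rh
      obtain ⟨e1, e2⟩ := B_eq hcs hs hc sphB hB3 hzB (by linarith)
      rw [e1, e2, hB3] at rB
      exact pole hcs hs hsc hP hsh (by linarith) (by simp [hx1]) (by simp [hy1]) (by simp [hz1])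
        (by simp [hz2]) rB (by linarith) o1 o2

theorem core2 {t1 t2 : ℝ} (hcs : c ^ 2 + s ^ 2 = 1) (hs : 0 < s) (hsc : s < c)
    (h : Tr c s a t2 x y z u) (hxa : x a = 0) (hya : y a = 0) (hza : z a = 1)
    (ht1 : a ≤ t1) (ht2 : t1 < t2) (hz1 : z t1 = 0) (hz2 : z t2 = 0)
    (hopt : ∀ T, Reach c s T 0 0 1 (x t2) (y t2) (z t2) → t2 - a ≤ T) : False := by
  obtain ⟨r, h1, h2, h3, h4⟩ := first_zero ht1 (h.ez.1.mono (Set.Icc_subset_Icc le_rfl ht2.le))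
    (by rw [hza]; norm_num) hz1.le
  have sp := h.sph r ⟨h1.le, by linarith⟩
  rw [h3] at sp
  have key : (y r < 0 ∨ (x r = 1 ∧ y r = 0)) ∨ (- y r < 0 ∨ (- x r = 1 ∧ - y r = 0)) := by
    rcases lt_trichotomy (y r) 0 with e | e | e
    · exact Or.inl (Or.inl e)
    · rw [e] at sp
      have : (x r - 1) * (x r + 1) = 0 := by linarith
      rcases mul_eq_zero.1 this with q | q
      · exact Or.inl (Or.inr ⟨by linarith, e⟩)
      · exact Or.inr (Or.inr ⟨by linarith, by linarith⟩)
    · exact Or.inr (Or.inl (by linarith))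
  rcases key with k | k
  · exact core1 hcs hs hsc h hxa hya hza h1 (by linarith) h3 hz2 h4 k hopt
  · refine core1 hcs hs hsc h.half (by simp [hxa]) (by simp [hya]) hza h1 (by linarith) h3 hz2 h4 k
      fun T hR => hopt T ?_
    simpa using hR.half
end

lemma AdmissiblePairS.toTr {α a b : ℝ} {γ : ℝ → Fin 3 → ℝ} {u : ℝ → ℝ}
    (h : AdmissiblePairS α a b γ u) :
    Tr (cos α) (sin α) a b (fun t => γ t 0) (fun t => γ t 1) (fun t => γ t 2) u := by
  have hc : ∀ i, ContinuousOn (fun t => γ t i) (Set.Icc a b) :=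
    fun i => (continuous_apply i).comp_continuousOn h.hcont
  have hii : ∀ f : ℝ → ℝ, ContinuousOn f (Set.Icc a b) → IntervalIntegrable f volume a b :=
    fun f hf => ContinuousOn.intervalIntegrable (by rwa [Set.uIcc_of_le h.hab])
  refine ⟨h.hab, h.humeas, h.hubound, h.hsph, ⟨hc 0, ?_, fun t ht => ?_⟩, ⟨hc 1, ?_, fun t ht => ?_⟩,
    ⟨hc 2, ?_, fun t ht => ?_⟩⟩
  · exact hii _ ((continuousOn_const.mul (hc 1)).neg)
  · have := h.hode t ht 0
    simpa [FS, GS] using this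
  · exact (hii _ (continuousOn_const.mul (hc 0))).sub
      (intg_mul h.hab h.humeas h.hubound (continuousOn_const.mul (hc 2)))
  · have := h.hode t ht 1
    simpa [FS, GS, sub_eq_add_neg] using this
  · exact intg_mul h.hab h.humeas h.hubound (continuousOn_const.mul (hc 1))
  · have := h.hode t ht 2
    simpa [FS, GS] using this

lemma Tr.toAdm {α a b : ℝ} {x y z u : ℝ → ℝ} (h : Tr (cos α) (sin α) a b x y z u) :
    AdmissiblePairS α a b (fun t => ![x t, y t, z t]) u where
  hab := h.hab
  humeas := h.um
  hubound := h.ub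
  hsph := fun t ht => by simpa using h.sph t ht
  hcont := by
    refine continuousOn_pi.2 fun i => ?_
    fin_cases i
    · simpa using h.ex.1
    · simpa using h.ey.1
    · simpa using h.ez.1
  hode := fun t ht i => by
    fin_cases i
    · simpa [FS, GS] using h.ex.2.2 t ht
    · simpa [FS, GS, sub_eq_add_neg] using h.ey.2.2 t ht
    · simpa [FS, GS] using h.ez.2.2 t ht

/-- A time optimal trajectory of `(Σ)_S` starting at the north pole meets the equator
at most once. -/
theorem equator_at_most_once (α a b : ℝ) (γ : ℝ → Fin 3 → ℝ) (u : ℝ → ℝ)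
    (hα : α ∈ Set.Ioo 0 (π / 4)) (hopt : TimeOptimalS α a b γ u)
    (h0 : γ a = ![0, 0, 1]) :
    Set.Subsingleton {t ∈ Set.Icc a b | γ t 2 = 0} := by
  have hs : 0 < sin α := sin_pos_of_pos_of_lt_pi hα.1 (by linarith [hα.2, pi_pos])
  have hsc : sin α < cos α := by
    rw [← sin_pi_div_two_sub]
    exact sin_lt_sin_of_lt_of_le_pi_div_two (by linarith [hα.1, pi_pos]) (by linarith [hα.1])
      (by linarith [hα.2])
  have hTr := hopt.1.toTr
  have main : ∀ t ∈ Set.Icc a b, ∀ t' ∈ Set.Icc a b, γ t 2 = 0 → γ t' 2 = 0 → t < t' → False := by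
    intro t ht t' ht' hz hz' hlt
    refine core2 (cos_sq_add_sin_sq α) hs hsc (hTr.mono le_rfl ht'.1 ht'.2) (by simp [h0])
      (by simp [h0]) (by simp [h0]) ht.1 hlt hz hz' fun T hR => ?_
    obtain ⟨x, y, z, v, k, e1, e2, e3, e4, e5, e6⟩ :=
      hR.trans (hTr.reach ht'.1 ht'.2 le_rfl)
    have := hopt.2 _ _ _ _ k.toAdm (by simp only [h0, e1, e2, e3]) (by
      ext i
      fin_cases i
      · simpa using e4
      · simpa using e5
      · simpa using e6)
    linarith
  rintro t ⟨ht, hz⟩ t' ⟨ht', hz'⟩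
  rcases lt_trichotomy t t' with e | e | e
  · exact (main t ht t' ht' hz hz' e).elim
  · exact e
  · exact (main t' ht' t ht hz' hz e).elim
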